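/- arXiv:math-ph/0303039 — 6 statements merged into one kernel-verified Lean document; each statement's English description precedes it below -/
import Mathlib

section
/- A polynomial P with real coefficients and degree at most g−1 is admissible if and only if λ²P(λ)² ≥ R(λ) for every real λ ≤ 0 and λ²P(λ)² ≤ R(λ) for every real λ ≥ 0. -/
/-! Since `E 0 = 0`, one has `R = X * S₀`, where `S₀` is the product over the remaining branch points.
These are negative reals or come in conjugate pairs, so `S₀` has real coefficients and
`S₀(0) > 0` (`exists_real_factor`). Hence `Q_P = X * S` with `S = X * P ^ 2 - S₀` and `S(0) < 0`.
Away from `0` the real roots of `Q_P` are those of `S`, with the same multiplicities, while the two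
inequalities together say that `S ≤ 0` on `ℝ`. So the claim reduces to: a real polynomial that is
negative at `0` is nonpositive on `ℝ` iff all its real roots have even multiplicity
(`eval_nonpos_of_even`, `even_rootMultiplicity_of_eval_nonpos`).
-/

open Polynomial

noncomputable section

/-- Branch point data for the real periodic Sine-Gordon spectral curve:
`E 0 = 0`, the points `E 1, …, E (2*g)` are pairwise distinct and distinct from `0`,
`E 1, …, E (2*m)` are real with `0 > E 1 > E 2 > … > E (2*m)`, and for `m < j ≤ g`
the branch points `E (2*j-1)`, `E (2*j)` are non-real complex conjugates. -/
structure BranchData (g m : ℕ) : Type where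
  E : ℕ → ℂ
  hg : 1 ≤ g
  hm : 1 ≤ m
  hmg : m ≤ g
  hE0 : E 0 = 0
  hinj : Set.InjOn E (Set.Iic (2 * g))
  hreal : ∀ k, 1 ≤ k → k ≤ 2 * m → (E k).im = 0
  hneg : ∀ k, 1 ≤ k → k ≤ 2 * m → (E k).re < 0
  hdec : ∀ k, 1 ≤ k → k + 1 ≤ 2 * m → (E (k + 1)).re < (E k).re
  hcomplex : ∀ j, m < j → j ≤ g → (E (2 * j - 1)).im ≠ 0
  hconj : ∀ j, m < j → j ≤ g → E (2 * j) = starRingEnd ℂ (E (2 * j - 1))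

/-- `R(λ) = ∏_{k=0}^{2g} (λ - E k)`, a monic polynomial of degree `2g+1`. -/
def Rpoly (g : ℕ) (E : ℕ → ℂ) : Polynomial ℂ :=
  ∏ k ∈ Finset.range (2 * g + 1), (X - C (E k))

/-- The restriction of `R` to the real line (real-valued thanks to the symmetry of the
branch points). -/
def Rre (g : ℕ) (E : ℕ → ℂ) (x : ℝ) : ℝ := ((Rpoly g E).eval (x : ℂ)).re

/-- `Q_P(λ) = λ² P(λ)² - R(λ)`. -/
def Qpoly (g : ℕ) (E : ℕ → ℂ) (P : Polynomial ℝ) : Polynomial ℂ :=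
  X ^ 2 * (P.map (algebraMap ℝ ℂ)) ^ 2 - Rpoly g E

/-- A real polynomial `P` (of degree at most `g-1`) is admissible if every nonzero real
root of `Q_P(λ) = λ²P(λ)² - R(λ)` has even multiplicity. -/
def Admissible (g : ℕ) (E : ℕ → ℂ) (P : Polynomial ℝ) : Prop :=
  ∀ x : ℝ, x ≠ 0 → (Qpoly g E P).IsRoot (x : ℂ) →
    Even ((Qpoly g E P).rootMultiplicity (x : ℂ))

/-- A vector of signs `s k = ±1`, `k = 1, …, m`. -/
def SignVec (m : ℕ) (s : ℕ → ℝ) : Prop :=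
  ∀ k, 1 ≤ k → k ≤ m → s k = 1 ∨ s k = -1

/-- `P` has topological type `s = (s 1, …, s m)` if for each `k = 1, …, m` and every `λ`
in the gap `[E (2k), E (2k-1)]` one has `s k · P(λ) ≥ √(R(λ))/(-λ)`. -/
def HasType (g m : ℕ) (E : ℕ → ℂ) (P : Polynomial ℝ) (s : ℕ → ℝ) : Prop :=
  ∀ k, 1 ≤ k → k ≤ m → ∀ lam : ℝ, (E (2 * k)).re ≤ lam → lam ≤ (E (2 * k - 1)).re →
    Real.sqrt (Rre g E lam) / (-lam) ≤ s k * P.eval lam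

/-- A real polynomial negative at `0` all of whose real roots have even multiplicity never becomes
positive: dividing out the roots one at a time leaves a polynomial without sign change. -/
lemma eval_nonpos_of_even (n : ℕ) : ∀ T : ℝ[X], T.natDegree ≤ n → T.eval 0 < 0 →
    (∀ x : ℝ, T.IsRoot x → Even (T.rootMultiplicity x)) → ∀ x : ℝ, T.eval x ≤ 0 := by
  induction n with
  | zero =>
    intro T hT h0 _ x
    rw [eq_C_of_natDegree_le_zero hT] at h0 ⊢
    simpa using h0.le
  | succ n ih =>
    intro T hT h0 heven x
    have hT0 : T ≠ 0 := by
      rintro rfl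
      simp at h0
    by_cases hr : ∃ a, T.IsRoot a
    · obtain ⟨a, ha⟩ := hr
      obtain ⟨U, hU, hUa⟩ := exists_eq_pow_rootMultiplicity_mul_and_not_dvd T hT0 a
      have hk := heven a ha
      have hkpos : 0 < T.rootMultiplicity a := (rootMultiplicity_pos hT0).2 ha
      generalize T.rootMultiplicity a = k at hU hk hkpos
      have hU0 : U ≠ 0 := by
        rintro rfl
        simp at hUa
      have hpow : (X - C a) ^ k ≠ 0 := pow_ne_zero _ (X_sub_C_ne_zero a)
      have heval : ∀ y, T.eval y = (y - a) ^ k * U.eval y := by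
        intro y
        simp [hU]
      have hdeg : U.natDegree ≤ n := by
        have h := congrArg natDegree hU
        rw [natDegree_mul hpow hU0, natDegree_pow, natDegree_X_sub_C] at h
        omega
      have hU0neg : U.eval 0 < 0 := by
        rw [heval] at h0
        by_contra hc
        exact absurd (mul_nonneg (hk.pow_nonneg (0 - a)) (not_lt.1 hc)) (not_le.2 h0)
      rw [heval]
      refine mul_nonpos_of_nonneg_of_nonpos (hk.pow_nonneg _) (ih U hdeg hU0neg ?_ x)
      intro y hy
      have hya : y ≠ a := by
        rintro rfl
        exact hUa (dvd_iff_isRoot.2 hy)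
      have h1 : ((X - C a) ^ k : ℝ[X]).rootMultiplicity y = 0 := by
        apply rootMultiplicity_eq_zero
        simp [IsRoot, sub_eq_zero, hya]
      have h2 : T.rootMultiplicity y = U.rootMultiplicity y := by
        rw [hU, rootMultiplicity_mul (mul_ne_zero hpow hU0), h1, zero_add]
      rw [← h2]
      apply heven
      rw [IsRoot, heval, hy.eq_zero, mul_zero]
    · by_contra hx
      -- without roots, a sign change contradicts the intermediate value theorem
      obtain ⟨a, ha⟩ := mem_range_of_exists_le_of_exists_ge T.continuous
        ⟨0, h0.le⟩ ⟨x, (not_le.1 hx).le⟩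
      exact hr ⟨a, ha⟩

lemma even_rootMultiplicity_of_eval_nonpos (T : ℝ[X]) (hT0 : T ≠ 0)
    (hT : ∀ x : ℝ, T.eval x ≤ 0) (a : ℝ) : Even (T.rootMultiplicity a) := by
  by_contra hk
  rw [Nat.not_even_iff_odd] at hk
  obtain ⟨U, hU, hUa⟩ := exists_eq_pow_rootMultiplicity_mul_and_not_dvd T hT0 a
  generalize T.rootMultiplicity a = k at hU hk
  have heval : ∀ y, T.eval y = (y - a) ^ k * U.eval y := by
    intro y
    simp [hU]
  have hne : U.eval a ≠ 0 := fun h => hUa (dvd_iff_isRoot.2 h)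
  -- the odd power of `x - a` forces `U ≤ 0` to the right of `a` and `U ≥ 0` to the left
  have hright : U.eval a ≤ 0 := by
    refine le_of_tendsto (U.continuous.continuousWithinAt (s := Set.Ioi a) (x := a)) ?_
    filter_upwards [self_mem_nhdsWithin] with y hy
    have h := hT y
    rw [heval] at h
    exact nonpos_of_mul_nonpos_right h (pow_pos (sub_pos.2 hy) k)
  have hleft : 0 ≤ U.eval a := by
    refine ge_of_tendsto (U.continuous.continuousWithinAt (s := Set.Iio a) (x := a)) ?_
    filter_upwards [self_mem_nhdsWithin] with y hy
    have h := hT y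
    rw [heval] at h
    have hneg : (y - a) ^ k < 0 := hk.pow_neg (sub_neg.2 hy)
    by_contra hc
    exact absurd (mul_pos_of_neg_of_neg hneg (not_le.1 hc)) (not_lt.2 h)
  exact hne (le_antisymm hright hleft)

/-- The product over the first `j` pairs of nonzero branch points is a real polynomial, positive at
`0`: each pair consists of two negative reals or of two non-real conjugates. -/
lemma exists_real_factor {g m : ℕ} (D : BranchData g m) (j : ℕ) (hj : j ≤ g) :
    ∃ T : ℝ[X], T.map (algebraMap ℝ ℂ) = ∏ k ∈ Finset.range (2 * j), (X - C (D.E (k + 1))) ∧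
      0 < T.eval 0 := by
  induction j with
  | zero => exact ⟨1, by simp⟩
  | succ j ih =>
    obtain ⟨T, hT, hpos⟩ := ih (by omega)
    have hprod : ∏ k ∈ Finset.range (2 * (j + 1)), (X - C (D.E (k + 1))) =
        (∏ k ∈ Finset.range (2 * j), (X - C (D.E (k + 1)))) *
          ((X - C (D.E (2 * j + 1))) * (X - C (D.E (2 * j + 2)))) := by
      rw [show 2 * (j + 1) = 2 * j + 1 + 1 by ring, Finset.prod_range_succ,
        Finset.prod_range_succ, mul_assoc]
    rw [hprod, ← hT]
    by_cases hjm : j + 1 ≤ m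
    · have hre : ∀ k, 1 ≤ k → k ≤ 2 * m → D.E k = algebraMap ℝ ℂ (D.E k).re := by
        intro k h1 h2
        apply Complex.ext <;> simp [D.hreal k h1 h2]
      have n1 := D.hneg (2 * j + 1) (by omega) (by omega)
      have n2 := D.hneg (2 * j + 2) (by omega) (by omega)
      refine ⟨T * ((X - C (D.E (2 * j + 1)).re) * (X - C (D.E (2 * j + 2)).re)), ?_, ?_⟩
      · rw [Polynomial.map_mul, Polynomial.map_mul, Polynomial.map_sub, Polynomial.map_sub,
          map_X, map_C, map_C, ← hre _ (by omega) (by omega), ← hre _ (by omega) (by omega)]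
      · simpa using mul_pos hpos (mul_pos_of_neg_of_neg n1 n2)
    · have hc := D.hconj (j + 1) (by omega) hj
      have him := D.hcomplex (j + 1) (by omega) hj
      rw [show 2 * (j + 1) - 1 = 2 * j + 1 by omega] at hc him
      rw [show 2 * (j + 1) = 2 * j + 2 by ring] at hc
      rw [hc]
      generalize D.E (2 * j + 1) = z at him
      -- `(X - z) (X - conj z) = X² - 2 Re z X + |z|²`
      refine ⟨T * (X ^ 2 - C (2 * z.re) * X + C (Complex.normSq z)), ?_, ?_⟩
      · have h1 : (algebraMap ℝ ℂ) (2 * z.re) = z + starRingEnd ℂ z := by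
          rw [Complex.add_conj]
          simp
        have h2 : (algebraMap ℝ ℂ) (Complex.normSq z) = z * starRingEnd ℂ z := by
          rw [Complex.mul_conj]
          simp
        rw [Polynomial.map_mul, Polynomial.map_add, Polynomial.map_sub, Polynomial.map_mul,
          Polynomial.map_pow, map_X, map_C, map_C, h1, h2, C_add, C_mul]
        ring
      · have hz : z ≠ 0 := by
          rintro rfl
          simp at him
        have := mul_pos hpos (Complex.normSq_pos.2 hz)
        simpa using this

/-- A real polynomial `P` of degree at most `g-1` is admissible iff
`λ²P(λ)² ≥ R(λ)` for every real `λ ≤ 0` and `λ²P(λ)² ≤ R(λ)` for every real `λ ≥ 0`. -/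
theorem statement2 (g m : ℕ) (D : BranchData g m) (P : Polynomial ℝ)
    (hdeg : P.natDegree ≤ g - 1) :
    Admissible g D.E P ↔
      (∀ lam : ℝ, lam ≤ 0 → Rre g D.E lam ≤ lam ^ 2 * (P.eval lam) ^ 2) ∧
      (∀ lam : ℝ, 0 ≤ lam → lam ^ 2 * (P.eval lam) ^ 2 ≤ Rre g D.E lam) := by
  obtain ⟨S₀, hS₀, hpos⟩ := exists_real_factor D g le_rfl
  have hR : Rpoly g D.E = (X * S₀).map (algebraMap ℝ ℂ) := by
    rw [Rpoly, Finset.prod_range_succ', D.hE0, ← hS₀, Polynomial.map_mul, map_X]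
    simp [mul_comm]
  have hRre : ∀ x : ℝ, Rre g D.E x = x * S₀.eval x := by
    intro x
    have h : (Rpoly g D.E).eval (x : ℂ) = (((X * S₀).eval x : ℝ) : ℂ) := by
      rw [hR]
      exact eval_map_apply (algebraMap ℝ ℂ) x
    rw [Rre, h, Complex.ofReal_re]
    simp
  obtain ⟨S, hS⟩ : ∃ S : ℝ[X], S = X * P ^ 2 - S₀ := ⟨_, rfl⟩
  have hSeval : ∀ x : ℝ, S.eval x = x * P.eval x ^ 2 - S₀.eval x := by
    intro x
    simp [hS]
  have hS0 : S.eval 0 < 0 := by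
    rw [hSeval]
    linarith
  have hSne : S ≠ 0 := by
    rintro h
    simp [h] at hS0
  have hQ : Qpoly g D.E P = (X * S).map (algebraMap ℝ ℂ) := by
    rw [Qpoly, hR, hS, show X * (X * P ^ 2 - S₀) = X ^ 2 * P ^ 2 - X * S₀ by ring,
      Polynomial.map_sub]
    simp
  have hXS : X * S ≠ 0 := mul_ne_zero X_ne_zero hSne
  have hinj : Function.Injective (algebraMap ℝ ℂ) := (algebraMap ℝ ℂ).injective
  have hmult : ∀ x : ℝ, x ≠ 0 →
      (Qpoly g D.E P).rootMultiplicity (x : ℂ) = S.rootMultiplicity x := by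
    intro x hx
    have h1 : (X : ℝ[X]).rootMultiplicity x = 0 := by
      apply rootMultiplicity_eq_zero
      simpa [IsRoot] using hx
    have h2 := eq_rootMultiplicity_map (p := X * S) hinj x
    rw [rootMultiplicity_mul hXS, h1, zero_add] at h2
    rw [hQ]
    exact h2.symm
  -- both sides are equivalent to `S ≤ 0` on the whole real line
  have hineq : ((∀ lam : ℝ, lam ≤ 0 → Rre g D.E lam ≤ lam ^ 2 * (P.eval lam) ^ 2) ∧
      (∀ lam : ℝ, 0 ≤ lam → lam ^ 2 * (P.eval lam) ^ 2 ≤ Rre g D.E lam)) ↔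
      ∀ x : ℝ, S.eval x ≤ 0 := by
    have key : ∀ x : ℝ, x ^ 2 * P.eval x ^ 2 = Rre g D.E x + x * S.eval x := by
      intro x
      rw [hRre, hSeval]
      ring
    constructor
    · rintro ⟨hl, hr⟩ x
      rcases lt_trichotomy x 0 with hx | rfl | hx
      · have h := hl x hx.le
        rw [key] at h
        nlinarith
      · exact hS0.le
      · have h := hr x hx.le
        rw [key] at h
        nlinarith
    · intro h
      refine ⟨fun x hx => ?_, fun x hx => ?_⟩
      · rw [key]
        nlinarith [mul_nonneg_of_nonpos_of_nonpos hx (h x)]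
      · rw [key]
        nlinarith [mul_nonpos_of_nonneg_of_nonpos hx (h x)]
  rw [hineq]
  constructor
  · intro hA
    refine eval_nonpos_of_even _ S le_rfl hS0 fun x hx => ?_
    have hx0 : x ≠ 0 := by
      rintro rfl
      exact hS0.ne hx
    rw [← hmult x hx0]
    refine hA x hx0 ?_
    have hroot : (X * S).IsRoot x := by
      rw [IsRoot, eval_mul, hx.eq_zero, mul_zero]
    rw [hQ]
    exact hroot.map
  · intro h x hx0 _
    rw [hmult x hx0]
    exact even_rootMultiplicity_of_eval_nonpos S hSne h x
end
end

section
/- Let P be an admissible polynomial. Then for each k ∈ {1, …, m} there is a unique sign s_k ∈ {+1, −1} such that s_k · P(λ) ≥ √(R(λ))/(−λ) for every λ in the gap [E_{2k}, E_{2k−1}]; moreover s_k · P(λ) > 0 for every λ in the open gap (E_{2k}, E_{2k−1}). Hence every admissible polynomial has exactly one topological type s = (s_1, …, s_m) ∈ {+1, −1}^m. -/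
/-!
The branch points pair up as `(E (2j+1), E (2j+2))`, `j < g`, and each pair is the root set of a
real monic quadratic, so `R = X * ∏ j, quad j` is real. For real `x` a complex conjugate pair
contributes a positive factor, and a real pair a factor that is negative exactly strictly between
its two points. Hence `R < 0` to the left of `E (2m)`, while `R > 0` inside each open gap.

By admissibility the real polynomial `q = X ^ 2 * P ^ 2 - R` has only roots of even multiplicity on
the negative half-line, so it does not change sign there (`mul_eval_nonneg_of_even`); as `R < 0`
to the left of `E (2m)`, `q` is positive there, so `q ≥ 0` on the whole negative half-line. Thus
`|λ P(λ)| ≥ √R(λ)` for `λ < 0`. In an open gap the right side is positive, so `P` has no zero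
and hence a constant sign there; this sign passes to the closed gap by continuity.
-/

open Polynomial

noncomputable section

/-! ### Sign changes of real polynomials -/

/-- A continuous function without zeros on a preconnected set takes values of one sign there. -/
theorem mul_eval_nonneg_of_no_zero {s : Set ℝ} (hs : IsPreconnected s) {f : ℝ → ℝ}
    (hf : ContinuousOn f s) (h0 : ∀ z ∈ s, f z ≠ 0) {x y : ℝ} (hx : x ∈ s) (hy : y ∈ s) :
    0 ≤ f x * f y := by
  by_contra! hneg
  have : (0 : ℝ) ∈ f '' s := by
    rcases mul_neg_iff.1 hneg with ⟨h1, h2⟩ | ⟨h1, h2⟩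
    · exact hs.intermediate_value hy hx hf ⟨h2.le, h1.le⟩
    · exact hs.intermediate_value hx hy hf ⟨h1.le, h2.le⟩
  obtain ⟨z, hz, hz0⟩ := this
  exact h0 z hz hz0

/-- A real polynomial whose negative roots all have even multiplicity does not change sign on the
negative half-line. Dividing out one root at a time reduces this to the intermediate value
theorem. -/
theorem mul_eval_nonneg_of_even (n : ℕ) : ∀ q : ℝ[X], q ≠ 0 → q.natDegree ≤ n →
    (∀ x : ℝ, x < 0 → q.IsRoot x → Even (q.rootMultiplicity x)) →
    ∀ x y : ℝ, x < 0 → y < 0 → 0 ≤ q.eval x * q.eval y := by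
  induction n with
  | zero =>
    intro q _ hd _ x y _ _
    rw [Polynomial.eq_C_of_natDegree_le_zero hd]
    simpa using mul_self_nonneg _
  | succ n ih =>
    intro q hq hd hev x y hx hy
    by_cases h : ∃ a < 0, q.IsRoot a
    · obtain ⟨a, ha, hroot⟩ := h
      obtain ⟨r, hr, hnd⟩ := exists_eq_pow_rootMultiplicity_mul_and_not_dvd q hq a
      have hpos := (rootMultiplicity_pos hq).2 hroot
      have he := hev a ha hroot
      set k := q.rootMultiplicity a with hk
      have hr0 : r ≠ 0 := by
        rintro rfl
        simp at hnd
      have hdeg : q.natDegree = k + r.natDegree := by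
        rw [hr, natDegree_mul (pow_ne_zero _ (X_sub_C_ne_zero a)) hr0, natDegree_pow,
          natDegree_X_sub_C, mul_one]
      have key := ih r hr0 (by omega) (by
        intro b hb hbr
        have hba : b ≠ a := by
          rintro rfl
          exact hnd (dvd_iff_isRoot.2 hbr)
        have h1 : q.IsRoot b := by
          rw [hr, IsRoot.def, eval_mul, hbr.eq_zero, mul_zero]
        have h2 := hev b hb h1
        rw [hr, rootMultiplicity_mul (hr ▸ hq)] at h2
        have h3 : rootMultiplicity b ((X - C a) ^ k) = 0 := by
          apply rootMultiplicity_eq_zero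
          simp [IsRoot.def, sub_eq_zero, hba]
        rwa [h3, zero_add] at h2) x y hx hy
      rw [hr]
      simp only [eval_mul, eval_pow, eval_sub, eval_X, eval_C]
      have e1 := he.pow_nonneg (x - a)
      have e2 := he.pow_nonneg (y - a)
      nlinarith [mul_nonneg (mul_nonneg e1 e2) key]
    · push Not at h
      exact mul_eval_nonneg_of_no_zero isPreconnected_Iio q.continuous.continuousOn
        (fun z hz h0 => h z hz h0) hx hy

/-! ### The real form of `R` and its signs -/

/-- The real quadratic with roots `E (2j+1)`, `E (2j+2)`, valid when their sum and product are
real. -/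
def quad (E : ℕ → ℂ) (j : ℕ) : ℝ[X] :=
  X ^ 2 - C (E (2 * j + 1) + E (2 * j + 2)).re * X + C (E (2 * j + 1) * E (2 * j + 2)).re

/-- The real form of `Rpoly`. -/
def Rreal (g : ℕ) (E : ℕ → ℂ) : ℝ[X] := X * ∏ j ∈ Finset.range g, quad E j

variable {g m : ℕ}

theorem BranchData.conj_pair (D : BranchData g m) {j : ℕ} (hj : j < g) (hmj : m ≤ j) :
    D.E (2 * j + 2) = starRingEnd ℂ (D.E (2 * j + 1)) :=
  D.hconj (j + 1) (by omega) (by omega)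

theorem BranchData.map_quad (D : BranchData g m) {j : ℕ} (hj : j < g) :
    (quad D.E j).map (algebraMap ℝ ℂ) =
      (X - C (D.E (2 * j + 1))) * (X - C (D.E (2 * j + 2))) := by
  have him : (D.E (2 * j + 1) + D.E (2 * j + 2)).im = 0 ∧
      (D.E (2 * j + 1) * D.E (2 * j + 2)).im = 0 := by
    rcases lt_or_ge j m with h | h
    · have h1 := D.hreal (2 * j + 1) (by omega) (by omega)
      have h2 := D.hreal (2 * j + 2) (by omega) (by omega)
      simp [h1, h2]
    · rw [D.conj_pair hj h]
      simp [mul_comm]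
  have hs : (((D.E (2 * j + 1) + D.E (2 * j + 2)).re : ℝ) : ℂ)
      = D.E (2 * j + 1) + D.E (2 * j + 2) := Complex.ext (by simp) (by simpa using him.1.symm)
  have hp : (((D.E (2 * j + 1) * D.E (2 * j + 2)).re : ℝ) : ℂ)
      = D.E (2 * j + 1) * D.E (2 * j + 2) := Complex.ext (Complex.ofReal_re _)
        (by rw [him.2, Complex.ofReal_im])
  simp only [quad, Polynomial.map_add, Polynomial.map_sub, Polynomial.map_mul, Polynomial.map_pow,
    map_X, map_C, Complex.coe_algebraMap]
  rw [hs, hp, C_add, C_mul]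
  ring

theorem BranchData.map_Rreal (D : BranchData g m) :
    (Rreal g D.E).map (algebraMap ℝ ℂ) = Rpoly g D.E := by
  have h : ∀ n ≤ g, (Rreal n D.E).map (algebraMap ℝ ℂ) = Rpoly n D.E := by
    intro n
    induction n with
    | zero => simp [Rreal, Rpoly, D.hE0]
    | succ n ih =>
      intro hn
      have h1 := ih (by omega)
      simp only [Rreal, Rpoly, Polynomial.map_mul] at h1 ⊢
      rw [Finset.prod_range_succ, Polynomial.map_mul, ← mul_assoc, h1, D.map_quad (by omega),
        show 2 * (n + 1) + 1 = (2 * n + 1) + 1 + 1 by ring,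
        Finset.prod_range_succ _ (2 * n + 1 + 1), Finset.prod_range_succ _ (2 * n + 1),
        mul_assoc]
  exact h g le_rfl

theorem BranchData.Rre_eq (D : BranchData g m) (x : ℝ) : Rre g D.E x = (Rreal g D.E).eval x := by
  have h : (Rpoly g D.E).eval (x : ℂ) = (((Rreal g D.E).eval x : ℝ) : ℂ) := by
    rw [← D.map_Rreal]
    exact eval_map_apply (algebraMap ℝ ℂ) x
  rw [Rre, h, Complex.ofReal_re]

theorem BranchData.eval_quad_real (D : BranchData g m) {j : ℕ} (hj : j < m) (x : ℝ) :
    (quad D.E j).eval x = (x - (D.E (2 * j + 1)).re) * (x - (D.E (2 * j + 2)).re) := by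
  have h1 := D.hreal (2 * j + 1) (by omega) (by omega)
  simp [quad, h1]
  ring

theorem BranchData.eval_quad_pos (D : BranchData g m) {j : ℕ} (hj : j < g) (hmj : m ≤ j) (x : ℝ) :
    0 < (quad D.E j).eval x := by
  have h1 : (D.E (2 * j + 1)).im ≠ 0 := D.hcomplex (j + 1) (by omega) (by omega)
  have h2 : (quad D.E j).eval x = (x - (D.E (2 * j + 1)).re) ^ 2 + (D.E (2 * j + 1)).im ^ 2 := by
    simp [quad, D.conj_pair hj hmj]
    ring
  rw [h2]
  positivity

theorem BranchData.re_anti (D : BranchData g m) {i j : ℕ} (hi : 1 ≤ i) (hij : i ≤ j) :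
    j ≤ 2 * m → (D.E j).re ≤ (D.E i).re := by
  induction j, hij using Nat.le_induction with
  | base => exact fun _ => le_rfl
  | succ j hij ih => exact fun h => (D.hdec j (by omega) h).le.trans (ih (by omega))

theorem BranchData.Rreal_neg (D : BranchData g m) {x : ℝ} (hx : x < (D.E (2 * m)).re) :
    (Rreal g D.E).eval x < 0 := by
  have hm := D.hm
  have h0 := D.hneg (2 * m) (by omega) le_rfl
  rw [Rreal, eval_mul, eval_X, eval_prod]
  refine mul_neg_of_neg_of_pos (by linarith) (Finset.prod_pos fun j hj => ?_)
  rw [Finset.mem_range] at hj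
  rcases lt_or_ge j m with h | h
  · rw [D.eval_quad_real h]
    have h1 := D.re_anti (i := 2 * j + 1) (j := 2 * m) (by omega) (by omega) le_rfl
    have h2 := D.re_anti (i := 2 * j + 2) (j := 2 * m) (by omega) (by omega) le_rfl
    exact mul_pos_of_neg_of_neg (by linarith) (by linarith)
  · exact D.eval_quad_pos hj h x

theorem BranchData.Rreal_pos (D : BranchData g m) {k : ℕ} (hk : k < m) {x : ℝ}
    (h1 : (D.E (2 * k + 2)).re < x) (h2 : x < (D.E (2 * k + 1)).re) :
    0 < (Rreal g D.E).eval x := by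
  have hmg := D.hmg
  have h0 := D.hneg (2 * k + 1) (by omega) (by omega)
  rw [Rreal, eval_mul, eval_X, eval_prod,
    ← Finset.mul_prod_erase _ _ (Finset.mem_range.2 (hk.trans_le hmg))]
  refine mul_pos_of_neg_of_neg (by linarith) (mul_neg_of_neg_of_pos ?_
    (Finset.prod_pos fun j hj => ?_))
  · rw [D.eval_quad_real hk]
    exact mul_neg_of_neg_of_pos (by linarith) (by linarith)
  rw [Finset.mem_erase, Finset.mem_range] at hj
  rcases lt_or_ge j m with h | h
  · rw [D.eval_quad_real h]
    rcases lt_or_gt_of_ne hj.1 with hlt | hgt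
    · have e1 := D.re_anti (i := 2 * j + 1) (j := 2 * k + 1) (by omega) (by omega) (by omega)
      have e2 := D.re_anti (i := 2 * j + 2) (j := 2 * k + 1) (by omega) (by omega) (by omega)
      exact mul_pos_of_neg_of_neg (by linarith) (by linarith)
    · have e1 := D.re_anti (i := 2 * k + 2) (j := 2 * j + 1) (by omega) (by omega) (by omega)
      have e2 := D.re_anti (i := 2 * k + 2) (j := 2 * j + 2) (by omega) (by omega) (by omega)
      exact mul_pos (by linarith) (by linarith)
  · exact D.eval_quad_pos hj.2 h x

/-! ### Consequences of admissibility -/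

/-- On the negative half-line `Q_P ≥ 0`: it does not change sign there, and it is positive to the
left of `E (2m)` because `R` is negative there. -/
theorem BranchData.Rreal_le (D : BranchData g m) {P : ℝ[X]} (hadm : Admissible g D.E P) {x : ℝ}
    (hx : x < 0) : (Rreal g D.E).eval x ≤ (x * P.eval x) ^ 2 := by
  set q : ℝ[X] := X ^ 2 * P ^ 2 - Rreal g D.E with hq
  have hmap : q.map (algebraMap ℝ ℂ) = Qpoly g D.E P := by
    simp [hq, Qpoly, ← D.map_Rreal]
  have hqe : ∀ y, q.eval y = (y * P.eval y) ^ 2 - (Rreal g D.E).eval y := by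
    intro y
    simp [hq, mul_pow]
  have hm := D.hm
  set y := (D.E (2 * m)).re - 1 with hy
  have hE := D.hneg (2 * m) (by omega) le_rfl
  have hypos : 0 < q.eval y := by
    have h1 := D.Rreal_neg (x := y) (by linarith)
    rw [hqe]
    nlinarith [sq_nonneg (y * P.eval y)]
  have hq0 : q ≠ 0 := by
    intro h
    simp [h] at hypos
  have hinj : Function.Injective (algebraMap ℝ ℂ) := Complex.ofReal_injective
  have hev : ∀ z : ℝ, z < 0 → q.IsRoot z → Even (q.rootMultiplicity z) := by
    intro z hz hroot
    have h1 : (Qpoly g D.E P).IsRoot (z : ℂ) := by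
      rw [← hmap]
      exact hroot.map
    have h2 := hadm z hz.ne h1
    rw [← hmap] at h2
    rwa [eq_rootMultiplicity_map hinj z]
  have h := mul_eval_nonneg_of_even _ q hq0 le_rfl hev x y hx (by linarith)
  have h' := nonneg_of_mul_nonneg_left h hypos
  rw [hqe] at h'
  linarith

/-- The statement for a single gap. The sign is that of `P` at the midpoint of the gap. -/
theorem BranchData.gap_sign (D : BranchData g m) {P : ℝ[X]} (hadm : Admissible g D.E P) {k : ℕ}
    (hk1 : 1 ≤ k) (hkm : k ≤ m) : ∃ s : ℝ, (s = 1 ∨ s = -1) ∧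
      (∀ lam : ℝ, (D.E (2 * k)).re ≤ lam → lam ≤ (D.E (2 * k - 1)).re →
        Real.sqrt (Rre g D.E lam) / (-lam) ≤ s * P.eval lam) ∧
      (∀ lam : ℝ, (D.E (2 * k)).re < lam → lam < (D.E (2 * k - 1)).re →
        0 < s * P.eval lam) ∧
      (∀ s' : ℝ, (s' = 1 ∨ s' = -1) →
        (∀ lam : ℝ, (D.E (2 * k)).re ≤ lam → lam ≤ (D.E (2 * k - 1)).re →
          Real.sqrt (Rre g D.E lam) / (-lam) ≤ s' * P.eval lam) → s' = s) := by
  obtain ⟨k, rfl⟩ : ∃ i, k = i + 1 := ⟨k - 1, by omega⟩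
  have hE1 := D.hneg (2 * k + 1) (by omega) (by omega)
  have hlt := D.hdec (2 * k + 1) (by omega) (by omega)
  simp only [show 2 * (k + 1) = 2 * k + 1 + 1 by omega, D.Rre_eq]
  set a := (D.E (2 * k + 1 + 1)).re with ha
  set b := (D.E (2 * k + 1)).re with hb
  have hR : ∀ x ∈ Set.Ioo a b, 0 < (Rreal g D.E).eval x :=
    fun x hx => D.Rreal_pos (by omega) hx.1 hx.2
  have hne : ∀ x ∈ Set.Ioo a b, P.eval x ≠ 0 := by
    intro x hx h0
    have h1 := D.Rreal_le hadm (hx.2.trans hE1)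
    rw [h0] at h1
    linarith [hR x hx]
  have hc : (a + b) / 2 ∈ Set.Ioo a b := ⟨by linarith, by linarith⟩
  set c := (a + b) / 2 with hcdef
  have hsame : ∀ x ∈ Set.Ioo a b, 0 < P.eval x * P.eval c := fun x hx =>
    lt_of_le_of_ne (mul_eval_nonneg_of_no_zero isPreconnected_Ioo P.continuous.continuousOn hne
      hx hc) (mul_ne_zero (hne x hx) (hne c hc)).symm
  obtain ⟨s, hs, hsc⟩ : ∃ s : ℝ, (s = 1 ∨ s = -1) ∧ 0 < s * P.eval c := by
    rcases lt_or_gt_of_ne (hne c hc) with h | h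
    · exact ⟨-1, Or.inr rfl, by linarith⟩
    · exact ⟨1, Or.inl rfl, by linarith⟩
  have hs2 : s ^ 2 = 1 := by rcases hs with rfl | rfl <;> norm_num
  have hopen : ∀ x ∈ Set.Ioo a b, 0 < s * P.eval x := by
    intro x hx
    have h1 := mul_pos (hsame x hx) hsc
    have h2 : P.eval x * P.eval c * (s * P.eval c) = s * P.eval x * P.eval c ^ 2 := by ring
    rw [h2] at h1
    exact pos_of_mul_pos_left h1 (sq_nonneg _)
  have hclosed : ∀ x ∈ Set.Icc a b, 0 ≤ s * P.eval x := by
    have hcl : IsClosed {x : ℝ | 0 ≤ s * P.eval x} :=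
      isClosed_le continuous_const (continuous_const.mul P.continuous)
    have := closure_minimal (fun x hx => (hopen x hx).le) hcl
    rwa [closure_Ioo hlt.ne] at this
  refine ⟨s, hs, fun x h1 h2 => ?_, fun x h1 h2 => hopen x ⟨h1, h2⟩, fun s' hs' h => ?_⟩
  · have hx : x < 0 := h2.trans_lt hE1
    rw [div_le_iff₀ (by linarith)]
    refine Real.sqrt_le_iff.2 ⟨mul_nonneg (hclosed x ⟨h1, h2⟩) (by linarith), ?_⟩
    have h3 : (s * P.eval x * -x) ^ 2 = s ^ 2 * (x * P.eval x) ^ 2 := by ring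
    rw [h3, hs2, one_mul]
    exact D.Rreal_le hadm hx
  · have h1 := h c hc.1.le hc.2.le
    have h2 : 0 < Real.sqrt ((Rreal g D.E).eval c) / (-c) :=
      div_pos (Real.sqrt_pos.2 (hR c hc)) (by linarith [hc.2])
    rcases hs with rfl | rfl <;> rcases hs' with rfl | rfl <;> first | rfl | (exfalso; linarith)

/-- Let `P` be an admissible polynomial. Then for each `k ∈ {1, …, m}` there
is a unique sign `s_k ∈ {+1, -1}` with `s_k · P(λ) ≥ √(R(λ))/(-λ)` on the closed gap
`[E (2k), E (2k-1)]`; moreover `s_k · P(λ) > 0` on the open gap. Hence every admissible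
polynomial has exactly one topological type `s ∈ {+1, -1}^m`. -/
theorem statement3 (g m : ℕ) (D : BranchData g m) (P : Polynomial ℝ)
    (hdeg : P.natDegree ≤ g - 1) (hadm : Admissible g D.E P) :
    (∀ k, 1 ≤ k → k ≤ m → ∃ s : ℝ, (s = 1 ∨ s = -1) ∧
      (∀ lam : ℝ, (D.E (2 * k)).re ≤ lam → lam ≤ (D.E (2 * k - 1)).re →
        Real.sqrt (Rre g D.E lam) / (-lam) ≤ s * P.eval lam) ∧
      (∀ lam : ℝ, (D.E (2 * k)).re < lam → lam < (D.E (2 * k - 1)).re →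
        0 < s * P.eval lam) ∧
      (∀ s' : ℝ, (s' = 1 ∨ s' = -1) →
        (∀ lam : ℝ, (D.E (2 * k)).re ≤ lam → lam ≤ (D.E (2 * k - 1)).re →
          Real.sqrt (Rre g D.E lam) / (-lam) ≤ s' * P.eval lam) → s' = s)) ∧
    ∃ s : ℕ → ℝ, SignVec m s ∧ HasType g m D.E P s ∧
      ∀ s' : ℕ → ℝ, SignVec m s' → HasType g m D.E P s' →
        ∀ k, 1 ≤ k → k ≤ m → s' k = s k := by
  have hgap := fun k h1 h2 => D.gap_sign hadm (k := k) h1 h2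
  refine ⟨hgap, ?_⟩
  choose! s hs hle _ huniq using hgap
  exact ⟨s, hs, hle, fun s' hs' hT k h1 h2 => huniq k h1 h2 _ (hs' k h1 h2) (hT k h1 h2)⟩
end
end

section
/- For each fixed s = (s_1, …, s_m) ∈ {+1, −1}^m, the set of admissible polynomials of topological type s is a convex subset of the real vector space of polynomials with real coefficients of degree at most g−1. -/
/-! The product `R(λ) / λ` is a real polynomial `A = ∏ q_j`, where `q_j` is the real quadratic with
roots `E (2j-1)`, `E (2j)`, and `Q_P = λ · h_P` with `h_P = λ P² - A` real. Since `A(0) > 0`, one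
has `h_P(0) < 0`, so `0` is not a root of `h_P`, and `P` is admissible iff all real roots of `h_P`
have even multiplicity, i.e. iff `h_P ≤ 0` on the whole real line (`admissible_iff`).

Being `h_P ≤ 0` is compatible with convex combinations inside a fixed topological type, pointwise
in `x`. For `x ≥ 0` the condition `x P(x)² ≤ A(x)` is convex in `P(x)`. For `x < 0` outside all
gaps every `q_j(x)` is nonnegative, so the condition holds for any `P`. For `x` in a gap it follows
from the inequality `s_k P(x) ≥ √R(x)/(-x)`, which is linear in `P`. -/

open Polynomial

noncomputable section

/-- A real polynomial whose real roots all have even multiplicity does not change sign. -/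
lemma eval_nonpos_of_even_s4 (f : ℝ[X]) (h0 : f.eval 0 < 0)
    (he : ∀ x : ℝ, f.IsRoot x → Even (f.rootMultiplicity x)) (x : ℝ) : f.eval x ≤ 0 := by
  obtain ⟨q, hq, -, hr⟩ := exists_prod_multiset_X_sub_C_mul f
  have hf : f ≠ 0 := by rintro rfl; simp at h0
  have hq0 : q ≠ 0 := by rintro rfl; simp at hq; exact hf hq.symm
  have hnr : ∀ y, q.eval y ≠ 0 := by
    intro y hy
    have : y ∈ q.roots := (mem_roots hq0).2 hy
    simp [hr] at this
  have hp : ∀ y : ℝ, 0 ≤ ((f.roots.map fun a => X - C a).prod).eval y := by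
    intro y
    rw [Finset.prod_multiset_map_count, eval_prod]
    refine Finset.prod_nonneg fun a ha => ?_
    rw [eval_pow]
    refine Even.pow_nonneg ?_ _
    rw [count_roots]
    exact he a ((mem_roots hf).1 (Multiset.mem_toFinset.1 ha))
  have hev : ∀ y, f.eval y = ((f.roots.map fun a => X - C a).prod).eval y * q.eval y := by
    intro y; rw [← eval_mul, hq]
  have hq00 : q.eval 0 < 0 := by
    by_contra hcon
    have := mul_nonneg (hp 0) (not_lt.1 hcon)
    rw [← hev] at this
    linarith
  have hqx : q.eval x < 0 := by
    by_contra hcon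
    have hmem : (0 : ℝ) ∈ Set.Icc (q.eval 0) (q.eval x) := ⟨hq00.le, not_lt.1 hcon⟩
    obtain ⟨y, hy⟩ := mem_range_of_exists_le_of_exists_ge (f := fun y => q.eval y)
      q.continuous ⟨0, hmem.1⟩ ⟨x, hmem.2⟩
    exact hnr y hy
  rw [hev]
  exact mul_nonpos_of_nonneg_of_nonpos (hp x) hqx.le

lemma even_rootMultiplicity_of_nonpos (f : ℝ[X]) (hf : f ≠ 0) (h : ∀ x, f.eval x ≤ 0) (x : ℝ) :
    Even (f.rootMultiplicity x) := by
  obtain ⟨q, hq, hnd⟩ := exists_eq_pow_rootMultiplicity_mul_and_not_dvd f hf x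
  generalize f.rootMultiplicity x = n at *
  by_contra hn
  rw [Nat.not_even_iff_odd] at hn
  have hqx : q.eval x ≠ 0 := fun h0 => hnd (dvd_iff_isRoot.2 h0)
  have hev : ∀ y, f.eval y = (y - x) ^ n * q.eval y := by intro y; rw [hq]; simp
  -- a fixed sign of `q` near `x` makes `f` positive on one side of `x`
  rcases lt_or_gt_of_ne hqx with hlt | hgt
  · have hnear := q.continuous.continuousAt.eventually_lt (continuousAt_const (y := (0 : ℝ))) hlt
    obtain ⟨y, hy, hyx⟩ := ((hnear.filter_mono nhdsWithin_le_nhds).and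
      (self_mem_nhdsWithin : Set.Iio x ∈ nhdsWithin x (Set.Iio x))).exists
    have := mul_pos_of_neg_of_neg (hn.pow_neg (sub_neg.2 hyx)) hy
    have := h y
    rw [hev] at this
    linarith
  · have hnear := (continuousAt_const (y := (0 : ℝ))).eventually_lt q.continuous.continuousAt hgt
    obtain ⟨y, hy, hyx⟩ := ((hnear.filter_mono nhdsWithin_le_nhds).and
      (self_mem_nhdsWithin : Set.Ioi x ∈ nhdsWithin x (Set.Ioi x))).exists
    have := mul_pos (pow_pos (sub_pos.2 hyx) n) hy
    have := h y
    rw [hev] at this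
    linarith

/-- The real monic quadratic with roots `E (2j+1)` and `E (2j+2)`, with `j` counted from `0`. The
real parts lose nothing: for branch point data both coefficients are real. -/
def pairQuad (E : ℕ → ℂ) (j : ℕ) : ℝ[X] :=
  X ^ 2 - C ((E (2 * j + 1) + E (2 * j + 2)).re) * X + C ((E (2 * j + 1) * E (2 * j + 2)).re)

/-- The real polynomial `A(λ) = R(λ) / λ`. -/
def Apoly (g : ℕ) (E : ℕ → ℂ) : ℝ[X] := ∏ j ∈ Finset.range g, pairQuad E j

/-- The real polynomial `h_P(λ) = Q_P(λ) / λ = λ P(λ)² - A(λ)`. -/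
def hpoly (g : ℕ) (E : ℕ → ℂ) (P : ℝ[X]) : ℝ[X] := X * P ^ 2 - Apoly g E

lemma prod_range_pairs {M : Type*} [CommMonoid M] (f : ℕ → M) (g : ℕ) :
    ∏ k ∈ Finset.range (2 * g + 1), f k =
      f 0 * ∏ j ∈ Finset.range g, (f (2 * j + 1) * f (2 * j + 2)) := by
  induction g with
  | zero => simp
  | succ n ih =>
    rw [show 2 * (n + 1) + 1 = 2 * n + 1 + 1 + 1 by ring, Finset.prod_range_succ,
      Finset.prod_range_succ, ih, Finset.prod_range_succ]
    simp only [mul_assoc]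

namespace BranchData

variable {g m : ℕ} (D : BranchData g m)

lemma pair_cases {j : ℕ} (hj : j < g) :
    (j < m ∧ (D.E (2 * j + 1)).im = 0 ∧ (D.E (2 * j + 2)).im = 0) ∨
      (m ≤ j ∧ (D.E (2 * j + 1)).im ≠ 0 ∧
        D.E (2 * j + 2) = starRingEnd ℂ (D.E (2 * j + 1))) := by
  rcases lt_or_ge j m with h | h
  · exact .inl ⟨h, D.hreal _ (by omega) (by omega), D.hreal _ (by omega) (by omega)⟩
  · have h1 := D.hcomplex (j + 1) (by omega) (by omega)
    have h2 := D.hconj (j + 1) (by omega) (by omega)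
    exact .inr ⟨h, h1, h2⟩

lemma map_pairQuad {j : ℕ} (hj : j < g) :
    (pairQuad D.E j).map (algebraMap ℝ ℂ) =
      (X - C (D.E (2 * j + 1))) * (X - C (D.E (2 * j + 2))) := by
  have h1 : (((D.E (2 * j + 1) + D.E (2 * j + 2)).re : ℝ) : ℂ) =
      D.E (2 * j + 1) + D.E (2 * j + 2) := by
    rcases D.pair_cases hj with ⟨-, ha, hb⟩ | ⟨-, -, hb⟩
    · apply Complex.ext <;> simp [ha, hb]
    · apply Complex.ext <;> simp [hb]
  have h2 : (((D.E (2 * j + 1) * D.E (2 * j + 2)).re : ℝ) : ℂ) =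
      D.E (2 * j + 1) * D.E (2 * j + 2) := by
    rcases D.pair_cases hj with ⟨-, ha, hb⟩ | ⟨-, -, hb⟩
    · apply Complex.ext <;> simp [ha, hb]
    · apply Complex.ext <;> simp [hb]; ring
  simp only [pairQuad, Polynomial.map_add, Polynomial.map_sub, Polynomial.map_mul,
    Polynomial.map_pow, map_X, map_C, Complex.coe_algebraMap]
  rw [h1, h2, C_add, C_mul]
  ring

lemma map_Apoly : (X * Apoly g D.E).map (algebraMap ℝ ℂ) = Rpoly g D.E := by
  rw [Rpoly, prod_range_pairs, D.hE0, Polynomial.map_mul, Apoly, Polynomial.map_prod]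
  simp only [map_X, C_0, sub_zero]
  congr 1
  exact Finset.prod_congr rfl fun j hj => D.map_pairQuad (Finset.mem_range.1 hj)

lemma Rre_eq_s4 (x : ℝ) : Rre g D.E x = x * (Apoly g D.E).eval x := by
  rw [Rre, ← D.map_Apoly]
  have := eval_map_algebraMap (B := ℂ) (X * Apoly g D.E) ((x : ℝ) : ℂ)
  rw [this, ← Complex.coe_algebraMap, aeval_algebraMap_apply]
  simp

lemma Qpoly_eq (P : ℝ[X]) : Qpoly g D.E P = (X * hpoly g D.E P).map (algebraMap ℝ ℂ) := by
  have : X * hpoly g D.E P = X ^ 2 * P ^ 2 - X * Apoly g D.E := by rw [hpoly]; ring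
  rw [this, Polynomial.map_sub, D.map_Apoly, Qpoly]
  simp

/-- A real quadratic factor is positive at `0`: its roots are two negative reals or a non-real
conjugate pair. -/
lemma pairQuad_eval_zero {j : ℕ} (hj : j < g) : 0 < (pairQuad D.E j).eval 0 := by
  simp only [pairQuad, eval_add, eval_sub, eval_pow, eval_X, eval_mul, eval_C, Complex.mul_re]
  rcases D.pair_cases hj with ⟨h, ha, hb⟩ | ⟨-, ha, hb⟩
  · have h1 := D.hneg (2 * j + 1) (by omega) (by omega)
    have h2 := D.hneg (2 * j + 2) (by omega) (by omega)
    rw [ha, hb]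
    nlinarith [mul_pos_of_neg_of_neg h1 h2]
  · rw [hb]
    simp only [Complex.conj_re, Complex.conj_im]
    have : 0 < (D.E (2 * j + 1)).im ^ 2 := by positivity
    nlinarith [sq_nonneg (D.E (2 * j + 1)).re]

lemma pairQuad_nonneg {j : ℕ} (hj : j < g) {x : ℝ}
    (hx : j < m → ¬ ((D.E (2 * j + 2)).re ≤ x ∧ x ≤ (D.E (2 * j + 1)).re)) :
    0 ≤ (pairQuad D.E j).eval x := by
  simp only [pairQuad, eval_add, eval_sub, eval_pow, eval_X, eval_mul, eval_C, Complex.mul_re,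
    Complex.add_re]
  rcases D.pair_cases hj with ⟨h, ha, hb⟩ | ⟨-, ha, hb⟩
  · have hd := D.hdec (2 * j + 1) (by omega) (by omega)
    rw [ha, hb]
    rcases lt_or_ge x (D.E (2 * j + 2)).re with h1 | h1
    · nlinarith [mul_pos (sub_pos.2 h1) (sub_pos.2 (h1.trans hd))]
    · have h2 : (D.E (2 * j + 1)).re < x := by
        by_contra hcon
        exact hx h ⟨h1, not_lt.1 hcon⟩
      nlinarith [mul_nonneg (sub_nonneg.2 h1) (sub_pos.2 h2).le]
  · rw [hb]
    simp only [Complex.conj_re, Complex.conj_im]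
    nlinarith [sq_nonneg (x - (D.E (2 * j + 1)).re), sq_nonneg (D.E (2 * j + 1)).im]

lemma hpoly_eval (P : ℝ[X]) (x : ℝ) :
    (hpoly g D.E P).eval x = x * P.eval x ^ 2 - (Apoly g D.E).eval x := by
  simp [hpoly]

lemma hpoly_eval_zero (P : ℝ[X]) : (hpoly g D.E P).eval 0 < 0 := by
  rw [hpoly_eval, Apoly, eval_prod]
  have := Finset.prod_pos fun j (hj : j ∈ Finset.range g) =>
    D.pairQuad_eval_zero (Finset.mem_range.1 hj)
  linarith

lemma admissible_iff (P : ℝ[X]) :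
    Admissible g D.E P ↔ ∀ x, (hpoly g D.E P).eval x ≤ 0 := by
  have h0 := D.hpoly_eval_zero P
  have hne : hpoly g D.E P ≠ 0 := by intro h; simp [h] at h0
  have hmul : X * hpoly g D.E P ≠ 0 := mul_ne_zero X_ne_zero hne
  have hmult : ∀ x : ℝ, x ≠ 0 →
      (Qpoly g D.E P).rootMultiplicity (x : ℂ) = (hpoly g D.E P).rootMultiplicity x := by
    intro x hx
    rw [D.Qpoly_eq, ← Complex.coe_algebraMap,
      ← eq_rootMultiplicity_map (algebraMap ℝ ℂ).injective, rootMultiplicity_mul hmul,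
      rootMultiplicity_eq_zero (p := (X : ℝ[X])) (by simpa using hx), zero_add]
  constructor
  · intro h x
    refine eval_nonpos_of_even_s4 _ h0 (fun y hy => ?_) x
    have hy0 : y ≠ 0 := by
      rintro rfl
      exact h0.ne hy
    rw [← hmult y hy0]
    refine h y hy0 ?_
    rw [D.Qpoly_eq, ← Complex.coe_algebraMap]
    refine IsRoot.map ?_
    rw [IsRoot.def, eval_mul, IsRoot.def.1 hy, mul_zero]
  · intro h x hx _
    rw [hmult x hx]
    exact even_rootMultiplicity_of_nonpos _ hne h x

/-- At negative points the sign of `h_P` is governed by the topological type alone. -/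
lemma hpoly_nonpos_of_hasType {P : ℝ[X]} {s : ℕ → ℝ} (hs : SignVec m s)
    (hP : HasType g m D.E P s) {x : ℝ} (hx : x < 0) : (hpoly g D.E P).eval x ≤ 0 := by
  rw [hpoly_eval]
  by_cases hgap : ∃ j < m, (D.E (2 * j + 2)).re ≤ x ∧ x ≤ (D.E (2 * j + 1)).re
  · obtain ⟨j, hj, h1, h2⟩ := hgap
    have h := hP (j + 1) (by omega) (by omega) x h1 h2
    rw [D.Rre_eq_s4, div_le_iff₀ (neg_pos.2 hx)] at h
    have hsq : (s (j + 1)) ^ 2 = 1 := by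
      rcases hs (j + 1) (by omega) (by omega) with h | h <;> rw [h] <;> norm_num
    -- squaring the type inequality gives `x A(x) ≤ x² P(x)²`, also when `x A(x) < 0`
    have h3 := Real.sqrt_le_left (y := s (j + 1) * P.eval x * -x)
      ((Real.sqrt_nonneg _).trans h) |>.1 h
    have h4 : x * (Apoly g D.E).eval x ≤ x * (x * P.eval x ^ 2) := by
      calc _ ≤ _ := h3
        _ = (s (j + 1)) ^ 2 * (x * (x * P.eval x ^ 2)) := by ring
        _ = _ := by rw [hsq, one_mul]
    have := (mul_le_mul_left_of_neg hx).1 h4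
    linarith
  · push Not at hgap
    have hA : 0 ≤ (Apoly g D.E).eval x := by
      rw [Apoly, eval_prod]
      refine Finset.prod_nonneg fun j hj => D.pairQuad_nonneg (Finset.mem_range.1 hj) ?_
      rintro hjm ⟨h1, h2⟩
      exact (hgap j hjm h1).not_ge h2
    have := mul_nonpos_of_nonpos_of_nonneg hx.le (sq_nonneg (P.eval x))
    linarith

end BranchData

/-- For each fixed sign vector `s ∈ {+1, -1}^m`, the set of admissible
polynomials of topological type `s` is a convex subset of the real vector space of real
polynomials of degree at most `g-1`. -/
theorem statement4 (g m : ℕ) (D : BranchData g m) (s : ℕ → ℝ) (hs : SignVec m s) :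
    Convex ℝ {P : Polynomial ℝ |
      P.natDegree ≤ g - 1 ∧ Admissible g D.E P ∧ HasType g m D.E P s} := by
  intro P hP P' hP' a b ha hb hab
  obtain ⟨hd, hA, hT⟩ := hP
  obtain ⟨hd', hA', hT'⟩ := hP'
  have hev : ∀ x, (a • P + b • P').eval x = a * P.eval x + b * P'.eval x := by
    intro x; simp
  have hT'' : HasType g m D.E (a • P + b • P') s := by
    intro k hk1 hk2 x h1 h2
    have e1 := hT k hk1 hk2 x h1 h2
    have e2 := hT' k hk1 hk2 x h1 h2
    rw [hev]
    calc Real.sqrt (Rre g D.E x) / (-x)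
        = a * (Real.sqrt (Rre g D.E x) / (-x)) + b * (Real.sqrt (Rre g D.E x) / (-x)) := by
          rw [← add_mul, hab, one_mul]
      _ ≤ a * (s k * P.eval x) + b * (s k * P'.eval x) := by gcongr
      _ = _ := by ring
  refine ⟨?_, ?_, hT''⟩
  · exact (natDegree_add_le _ _).trans
      (max_le ((natDegree_smul_le _ _).trans hd) ((natDegree_smul_le _ _).trans hd'))
  · rw [D.admissible_iff] at hA hA' ⊢
    intro x
    rcases lt_or_ge x 0 with hx | hx
    · exact D.hpoly_nonpos_of_hasType hs hT'' hx
    · have e1 := hA x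
      have e2 := hA' x
      rw [D.hpoly_eval] at e1 e2 ⊢
      rw [hev]
      have hconv : (a * P.eval x + b * P'.eval x) ^ 2 ≤ a * P.eval x ^ 2 + b * P'.eval x ^ 2 := by
        simpa using (even_two.convexOn_pow (𝕜 := ℝ)).2 (Set.mem_univ (P.eval x))
          (Set.mem_univ (P'.eval x)) ha hb hab
      have e3 := mul_le_mul_of_nonneg_left hconv hx
      have e4 := mul_nonpos_of_nonneg_of_nonpos ha e1
      have e5 := mul_nonpos_of_nonneg_of_nonpos hb e2
      have e6 : (Apoly g D.E).eval x = a * (Apoly g D.E).eval x + b * (Apoly g D.E).eval x := by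
        rw [← add_mul, hab, one_mul]
      linarith
end
end

section
/- For every choice of signs s = (s_1, …, s_m) ∈ {+1, −1}^m there exists an admissible polynomial (with real coefficients, of degree at most g−1) whose topological type is s. In particular the set of admissible polynomials splits into 2^m nonempty classes indexed by the topological types. -/
/-!
Put `x = -t²` and `S = R / x`. The idea is to factor `S(-t²) = F(t) F(-t)` with a real polynomial
`F(t) = ∏ (t ± √(-E_k))`, the roots attached to a conjugate pair of branch points being taken
conjugate. Splitting `F(t) = B(-t²) + t P(-t²)` into its even and odd parts gives
`S = B² + x P²`, so `x² P² - R = -x B²`, and `P` is admissible of degree at most `g - 1`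
whatever the choice of signs (`exists_even_odd_parts`, `admissible_of_eq`).

For the topological type, `t P(-t²) = (F(t) - F(-t)) / 2`. On the `l`-th gap `F(t)` and `-F(-t)` both
have the sign `s_l` if the `k`-th real pair contributes the factor
`(t + √(-E_{2k-1})) (t + s_k s_{k+1} √(-E_{2k}))` (with `s_{m+1} = 1`): the factors with `k < l`
contribute no sign, and the signs of the others telescope (`exists_pair`, `telescope`). The
inequality between arithmetic and geometric means then gives
`s_l t P(-t²) ≥ √(-F(t) F(-t)) = √(-S)`, which is the inequality defining the type.

Finally `R > 0` at the midpoint of each gap, so no polynomial has two different types; the `2^m`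
nonempty classes are therefore pairwise distinct.
-/

open Polynomial

noncomputable section

/-- The even part `B` and odd part `P` (in the variable `x = -t²`) of a product of real quadratics
`t² + p t + q`; the product of their norms `(q - x)² + x p²` is `B² + x P²`. -/
lemma exists_even_odd_parts (p q : ℕ → ℝ) (n : ℕ) : ∃ B P : ℝ[X],
    B.degree ≤ n ∧ P.degree < n ∧
    B ^ 2 + X * P ^ 2 = ∏ i ∈ Finset.range n, ((C (q i) - X) ^ 2 + X * C (p i) ^ 2) ∧
    ∀ t : ℝ, B.eval (-t ^ 2) + t * P.eval (-t ^ 2)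
      = ∏ i ∈ Finset.range n, (t ^ 2 + p i * t + q i) := by
  induction n with
  | zero => exact ⟨1, 0, by simp, by simp, by simp, by simp⟩
  | succ n ih =>
    obtain ⟨B, P, hB, hP, hN, hF⟩ := ih
    have hlin : (C (q n) - X : ℝ[X]).degree ≤ (1 : ℕ) :=
      (degree_sub_le _ _).trans (max_le (degree_C_le.trans (by norm_num)) degree_X_le)
    have hc : (C (p n) : ℝ[X]).degree ≤ (0 : ℕ) := degree_C_le
    have hX : (X : ℝ[X]).degree ≤ (1 : ℕ) := degree_X_le
    have hP1 : (X * P).degree ≤ ((n : ℕ) : WithBot ℕ) := by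
      rw [degree_le_iff_coeff_zero]
      rw [degree_lt_iff_coeff_zero] at hP
      intro k hk
      obtain _ | k := k
      · simp
      · rw [coeff_X_mul]
        refine hP k ?_
        have : n < k + 1 := by exact_mod_cast hk
        omega
    have hPl : (P * (C (q n) - X)).degree ≤ ((n : ℕ) : WithBot ℕ) := by
      have h1 : P * (C (q n) - X) = C (q n) * P - X * P := by ring
      rw [h1]
      refine (degree_sub_le _ _).trans (max_le ?_ hP1)
      exact (by simpa using degree_mul_le_of_le (degree_C_le (a := q n)) hP.le)
    refine ⟨B * (C (q n) - X) - X * P * C (p n), B * C (p n) + P * (C (q n) - X), ?_, ?_, ?_, ?_⟩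
    · refine (degree_sub_le _ _).trans (max_le ?_ ?_)
      · exact_mod_cast degree_mul_le_of_le hB hlin
      · refine (degree_mul_le_of_le hP1 hc).trans ?_
        exact_mod_cast Nat.le_succ n
    · refine lt_of_le_of_lt (b := ((n : ℕ) : WithBot ℕ)) ?_ (by exact_mod_cast Nat.lt_succ_self n)
      refine (degree_add_le _ _).trans (max_le ?_ hPl)
      exact_mod_cast degree_mul_le_of_le hB hc
    · rw [Finset.prod_range_succ, ← hN]
      ring
    · intro t
      rw [Finset.prod_range_succ, ← hF]
      simp
      ring

lemma re_anti {g m : ℕ} (D : BranchData g m) {j k : ℕ} (hj : 1 ≤ j) (hjk : j < k)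
    (hk : k ≤ 2 * m) : (D.E k).re < (D.E j).re := by
  induction k, hjk using Nat.le_induction with
  | base => exact D.hdec j hj hk
  | succ k hk' ih => exact (D.hdec k (by omega) hk).trans (ih (by omega))

/-- The quadratic factor `t² + p t + q` of `F` attached to the pair `E_{2i+1}, E_{2i+2}`, and its
sign at `±t` when `-t²` lies in the gap with index `l` (gaps are indexed from `0`). -/
lemma exists_pair {g m : ℕ} (D : BranchData g m) {σ : ℝ} (hσ : σ = 1 ∨ σ = -1) {i : ℕ}
    (hi : i < g) (hσm : m ≤ i → σ = 1) : ∃ p q : ℝ,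
    D.E (2 * i + 1) * D.E (2 * i + 2) = (q : ℂ) ^ 2 ∧
    D.E (2 * i + 1) + D.E (2 * i + 2) = 2 * (q : ℂ) - (p : ℂ) ^ 2 ∧
    ∀ l < m, ∀ t : ℝ, 0 ≤ t → (D.E (2 * l + 2)).re ≤ -t ^ 2 → -t ^ 2 ≤ (D.E (2 * l + 1)).re →
      0 ≤ (if l ≤ i then σ else 1) * (t ^ 2 + p * t + q) ∧
      0 ≤ (if l ≤ i then σ else 1) * (if i = l then -1 else 1) * (t ^ 2 + p * -t + q) := by
  by_cases him : i < m
  · obtain ⟨a, ha, haE⟩ : ∃ a : ℝ, 0 ≤ a ∧ a ^ 2 = -(D.E (2 * i + 1)).re :=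
      ⟨_, Real.sqrt_nonneg _, Real.sq_sqrt (by linarith [D.hneg (2 * i + 1) (by omega) (by omega)])⟩
    obtain ⟨b, hb, hbE⟩ : ∃ b : ℝ, 0 ≤ b ∧ b ^ 2 = -(D.E (2 * i + 2)).re :=
      ⟨_, Real.sqrt_nonneg _, Real.sq_sqrt (by linarith [D.hneg (2 * i + 2) (by omega) (by omega)])⟩
    have e1 : D.E (2 * i + 1) = ((-a ^ 2 : ℝ) : ℂ) := by
      apply Complex.ext
      · simp only [Complex.ofReal_re]; linarith
      · rw [Complex.ofReal_im]; exact D.hreal (2 * i + 1) (by omega) (by omega)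
    have e2 : D.E (2 * i + 2) = ((-b ^ 2 : ℝ) : ℂ) := by
      apply Complex.ext
      · simp only [Complex.ofReal_re]; linarith
      · rw [Complex.ofReal_im]; exact D.hreal (2 * i + 2) (by omega) (by omega)
    have hσ2 : σ ^ 2 = 1 := by rcases hσ with h | h <;> rw [h] <;> norm_num
    have hσ2c : (σ : ℂ) ^ 2 = 1 := by exact_mod_cast hσ2
    refine ⟨a + σ * b, σ * (a * b), ?_, ?_, ?_⟩
    · rw [e1, e2]; push_cast; linear_combination -(a : ℂ) ^ 2 * b ^ 2 * hσ2c
    · rw [e1, e2]; push_cast; linear_combination (b : ℂ) ^ 2 * hσ2c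
    · intro l hl t ht h1 h2
      have f1 : t ^ 2 + (a + σ * b) * t + σ * (a * b) = (t + a) * (t + σ * b) := by ring
      have f2 : t ^ 2 + (a + σ * b) * -t + σ * (a * b) = (a - t) * (σ * b - t) := by ring
      rw [f1, f2]
      have hta : 0 ≤ t + a := by linarith
      rcases lt_trichotomy i l with hil | rfl | hil
      · -- the pair lies to the right of the gap: `a < b ≤ t`
        have h3 := re_anti D (j := 2 * i + 1) (k := 2 * l + 1) (by omega) (by omega) (by omega)
        have h4 := re_anti D (j := 2 * i + 2) (k := 2 * l + 1) (by omega) (by omega) (by omega)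
        have hat : a ≤ t := abs_le_of_sq_le_sq' (by linarith) ht |>.2
        have hbt : b ≤ t := abs_le_of_sq_le_sq' (by linarith) ht |>.2
        rw [if_neg (by omega), if_neg (by omega)]
        rcases hσ with rfl | rfl
        · exact ⟨by nlinarith [mul_nonneg hta (add_nonneg ht hb)],
            by nlinarith [mul_nonneg (sub_nonneg.2 hat) (sub_nonneg.2 hbt)]⟩
        · exact ⟨by nlinarith [mul_nonneg hta (sub_nonneg.2 hbt)],
            by nlinarith [mul_nonneg (sub_nonneg.2 hat) (add_nonneg ht hb)]⟩
      · have hat : a ≤ t := abs_le_of_sq_le_sq' (by linarith) ht |>.2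
        have hbt : t ≤ b := abs_le_of_sq_le_sq' (by linarith) hb |>.2
        rw [if_pos le_rfl, if_pos rfl]
        rcases hσ with rfl | rfl
        · exact ⟨by nlinarith [mul_nonneg hta (add_nonneg ht hb)],
            by nlinarith [mul_nonneg (sub_nonneg.2 hat) (sub_nonneg.2 hbt)]⟩
        · exact ⟨by nlinarith [mul_nonneg hta (sub_nonneg.2 hbt)],
            by nlinarith [mul_nonneg (sub_nonneg.2 hat) (add_nonneg ht hb)]⟩
      · -- the pair lies to the left of the gap: `t ≤ a < b`
        have h3 := re_anti D (j := 2 * l + 2) (k := 2 * i + 1) (by omega) (by omega) (by omega)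
        have h4 := re_anti D (j := 2 * l + 2) (k := 2 * i + 2) (by omega) (by omega) (by omega)
        have hat : t ≤ a := abs_le_of_sq_le_sq' (by linarith) ha |>.2
        have hbt : t ≤ b := abs_le_of_sq_le_sq' (by linarith) hb |>.2
        rw [if_pos (by omega), if_neg (by omega)]
        rcases hσ with rfl | rfl
        · exact ⟨by nlinarith [mul_nonneg hta (add_nonneg ht hb)],
            by nlinarith [mul_nonneg (sub_nonneg.2 hat) (sub_nonneg.2 hbt)]⟩
        · exact ⟨by nlinarith [mul_nonneg hta (sub_nonneg.2 hbt)],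
            by nlinarith [mul_nonneg (sub_nonneg.2 hat) (add_nonneg ht hb)]⟩
  · -- a conjugate pair: with `z² = -E_{2i+1}` the factor is `(t + z) (t + conj z) = |t + z|²`
    obtain ⟨z, hz⟩ : ∃ z : ℂ, z ^ 2 = -D.E (2 * i + 1) :=
      IsAlgClosed.exists_pow_nat_eq _ (by norm_num)
    have hc : D.E (2 * i + 2) = starRingEnd ℂ (D.E (2 * i + 1)) :=
      D.hconj (i + 1) (by omega) (by omega)
    have e1 : D.E (2 * i + 1) = -z ^ 2 := by rw [hz, neg_neg]
    have hq : ((Complex.normSq z : ℝ) : ℂ) = z * starRingEnd ℂ z := (Complex.mul_conj z).symm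
    have hp : ((2 * z.re : ℝ) : ℂ) = z + starRingEnd ℂ z := (Complex.add_conj z).symm
    refine ⟨2 * z.re, Complex.normSq z, ?_, ?_, ?_⟩
    · rw [hc, e1, hq, map_neg, map_pow]; ring
    · rw [hc, e1, hq, hp, map_neg, map_pow]; ring
    · intro l hl t ht h1 h2
      rw [hσm (by omega), ite_self, if_neg (by omega), Complex.normSq_apply]
      exact ⟨by nlinarith [sq_nonneg (t + z.re), sq_nonneg z.im],
        by nlinarith [sq_nonneg (t - z.re), sq_nonneg z.im]⟩

lemma Rpoly_eq (g : ℕ) (E : ℕ → ℂ) (h0 : E 0 = 0) :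
    Rpoly g E = X * ∏ i ∈ Finset.range g,
      ((X - C (E (2 * i + 1))) * (X - C (E (2 * i + 2)))) := by
  unfold Rpoly
  induction g with
  | zero => simp [h0]
  | succ n ih =>
    rw [show 2 * (n + 1) + 1 = 2 * n + 1 + 1 + 1 by ring, Finset.prod_range_succ,
      Finset.prod_range_succ, ih, Finset.prod_range_succ]
    ring

lemma admissible_of_eq {g : ℕ} {E : ℕ → ℂ} {B P : ℝ[X]}
    (h : Rpoly g E = X * (B ^ 2 + X * P ^ 2).map (algebraMap ℝ ℂ)) : Admissible g E P := by
  intro x hx _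
  have hQ : Qpoly g E P = -(X * (B.map (algebraMap ℝ ℂ)) ^ 2) := by
    rw [Qpoly, h]
    simp only [Polynomial.map_add, Polynomial.map_mul, Polynomial.map_pow, Polynomial.map_X]
    ring
  by_cases h0 : X * (B.map (algebraMap ℝ ℂ)) ^ 2 = 0
  · rw [hQ, h0]; simp
  · have hX : rootMultiplicity (x : ℂ) (X : ℂ[X]) = 0 := by
      apply rootMultiplicity_eq_zero
      simpa [IsRoot] using hx
    have hB : B.map (algebraMap ℝ ℂ) ^ 2 ≠ 0 := right_ne_zero_of_mul h0
    rw [hQ, ← neg_one_mul, ← C_1, ← C_neg,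
      rootMultiplicity_mul (by simpa using h0), rootMultiplicity_C,
      rootMultiplicity_mul h0, hX, pow_two,
      rootMultiplicity_mul (by rwa [← pow_two])]
    simp

/-- The signs `σ_i = s_i s_{i+1}` of the factors telescope. -/
lemma telescope {s : ℕ → ℝ} (hs : ∀ i, s i ^ 2 = 1) {l : ℕ} :
    ∀ n, l ≤ n → ∏ i ∈ Finset.range n, (if l ≤ i then s i * s (i + 1) else 1) = s l * s n := by
  intro n hn
  induction n, hn using Nat.le_induction with
  | base =>
    rw [Finset.prod_eq_one, ← pow_two, hs]
    intro i hi
    rw [if_neg (by simpa using hi)]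
  | succ n hn ih =>
    rw [Finset.prod_range_succ, ih, if_pos hn]
    linear_combination s l * s (n + 1) * hs n

/-- The construction: `B` and `P` are the even and odd parts of `F`; on the `l`-th gap
`F(t)` and `-F(-t)` have the sign `s_l`. -/
lemma exists_factorization {g m : ℕ} (D : BranchData g m) {s : ℕ → ℝ} (hs : SignVec m s) :
    ∃ B P : ℝ[X], P.natDegree ≤ g - 1 ∧
      Rpoly g D.E = X * (B ^ 2 + X * P ^ 2).map (algebraMap ℝ ℂ) ∧
      ∀ l, 1 ≤ l → l ≤ m → ∀ t : ℝ, 0 ≤ t → (D.E (2 * l)).re ≤ -t ^ 2 →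
        -t ^ 2 ≤ (D.E (2 * l - 1)).re →
        0 ≤ s l * (B.eval (-t ^ 2) + t * P.eval (-t ^ 2)) ∧
        0 ≤ -(s l * (B.eval (-t ^ 2) - t * P.eval (-t ^ 2))) := by
  -- the signs, indexed from `0` and continued by `1` beyond the real gaps
  obtain ⟨r, hr⟩ : ∃ r : ℕ → ℝ, ∀ i, r i = if i < m then s (i + 1) else 1 := ⟨_, fun _ => rfl⟩
  have hr1 : ∀ i, r i = 1 ∨ r i = -1 := by
    intro i
    rw [hr]
    split_ifs with h
    · exact hs (i + 1) (by omega) (by omega)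
    · exact Or.inl rfl
  have hr2 : ∀ i, r i ^ 2 = 1 := fun i => by rcases hr1 i with h | h <;> rw [h] <;> norm_num
  have hrm : ∀ i, m ≤ i → r i = 1 := fun i hi => by rw [hr, if_neg (by omega)]
  have key : ∀ i, ∃ p q : ℝ, i < g → _ := fun i => by
    by_cases hi : i < g
    · obtain ⟨p, q, h⟩ := exists_pair D (σ := r i * r (i + 1))
        (by rcases hr1 i with h | h <;> rcases hr1 (i + 1) with h' | h' <;> rw [h, h'] <;> norm_num)
        hi (fun h => by rw [hrm _ h, hrm _ (by omega), one_mul])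
      exact ⟨p, q, fun _ => h⟩
    · exact ⟨0, 0, fun h => absurd h hi⟩
  choose p q hpq using key
  obtain ⟨B, P, -, hP, hN, hF⟩ := exists_even_odd_parts p q g
  refine ⟨B, P, ?_, ?_, ?_⟩
  · by_cases h0 : P = 0
    · simp [h0]
    · have := (natDegree_lt_iff_degree_lt h0).2 hP
      omega
  · rw [Rpoly_eq _ _ D.hE0, hN, Polynomial.map_prod]
    congr 1
    refine Finset.prod_congr rfl fun i hi => ?_
    obtain ⟨h1, h2, -⟩ := hpq i (Finset.mem_range.1 hi)
    have h1' := congrArg (C : ℂ → ℂ[X]) h1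
    have h2' := congrArg (C : ℂ → ℂ[X]) h2
    simp only [C_mul, C_add, C_sub, C_pow] at h1' h2'
    simp only [Polynomial.map_add, Polynomial.map_sub, Polynomial.map_mul, Polynomial.map_pow,
      Polynomial.map_X, Polynomial.map_C, Complex.coe_algebraMap]
    have h3 : (C (2 : ℂ) : ℂ[X]) = 2 := rfl
    rw [h3] at h2'
    linear_combination h1' - X * h2'
  · intro l hl1 hlm t ht h1 h2
    obtain ⟨l, rfl⟩ : ∃ k, l = k + 1 := ⟨l - 1, by omega⟩
    have hgm := D.hmg
    have hT : ∏ i ∈ Finset.range g, (if l ≤ i then r i * r (i + 1) else 1) = s (l + 1) := by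
      rw [telescope hr2 g (by omega), hrm g D.hmg, mul_one, hr, if_pos (by omega)]
    have hδ : ∏ i ∈ Finset.range g, (if i = l then (-1 : ℝ) else 1) = -1 := by
      rw [Finset.prod_ite_eq', if_pos (Finset.mem_range.2 (by omega))]
    have hfac := fun i (hi : i ∈ Finset.range g) =>
      (hpq i (Finset.mem_range.1 hi)).2.2 l (by omega) t ht h1 h2
    constructor
    · rw [hF, ← hT, ← Finset.prod_mul_distrib]
      exact Finset.prod_nonneg fun i hi => (hfac i hi).1
    · have e := hF (-t)
      rw [neg_sq] at e
      have : -(s (l + 1) * (eval (-t ^ 2) B - t * eval (-t ^ 2) P))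
          = s (l + 1) * (-1) * (eval (-t ^ 2) B + -t * eval (-t ^ 2) P) := by ring
      rw [this, e]
      rw [← hT, ← hδ, ← Finset.prod_mul_distrib, ← Finset.prod_mul_distrib]
      exact Finset.prod_nonneg fun i hi => (hfac i hi).2

lemma eval_Rpoly {g : ℕ} {E : ℕ → ℂ} {S : ℝ[X]}
    (h : Rpoly g E = X * S.map (algebraMap ℝ ℂ)) (x : ℝ) :
    (Rpoly g E).eval (x : ℂ) = ((x * S.eval x : ℝ) : ℂ) := by
  have : ((x : ℝ) : ℂ) = algebraMap ℝ ℂ x := rfl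
  rw [h, eval_mul, eval_X, this, eval_map_apply, Complex.coe_algebraMap]
  push_cast
  rfl

lemma Rre_eq {g : ℕ} {E : ℕ → ℂ} {B P : ℝ[X]}
    (h : Rpoly g E = X * (B ^ 2 + X * P ^ 2).map (algebraMap ℝ ℂ)) (t : ℝ) :
    Rre g E (-t ^ 2) = t ^ 2 * (-((B.eval (-t ^ 2) + t * P.eval (-t ^ 2)) *
      (B.eval (-t ^ 2) - t * P.eval (-t ^ 2)))) := by
  rw [Rre, eval_Rpoly h, Complex.ofReal_re]
  simp only [eval_add, eval_mul, eval_pow, eval_X]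
  ring

lemma exists_sq {x : ℝ} (hx : x < 0) : ∃ t : ℝ, 0 < t ∧ x = -t ^ 2 :=
  ⟨√(-x), Real.sqrt_pos.2 (by linarith), by rw [Real.sq_sqrt (by linarith)]; ring⟩

lemma exists_of_sign {g m : ℕ} (D : BranchData g m) {s : ℕ → ℝ} (hs : SignVec m s) :
    ∃ P : ℝ[X], P.natDegree ≤ g - 1 ∧ Admissible g D.E P ∧ HasType g m D.E P s := by
  obtain ⟨B, P, hP, hR, hF⟩ := exists_factorization D hs
  refine ⟨P, hP, admissible_of_eq hR, ?_⟩
  intro k hk hkm x h1 h2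
  obtain ⟨t, ht, rfl⟩ := exists_sq (h2.trans_lt (D.hneg (2 * k - 1) (by omega) (by omega)))
  obtain ⟨hu, hv⟩ := hF k hk hkm t ht.le h1 h2
  have hs2 : s k ^ 2 = 1 := by rcases hs k hk hkm with h | h <;> rw [h] <;> norm_num
  rw [Rre_eq hR, neg_neg, div_le_iff₀ (by positivity)]
  set b := eval (-t ^ 2) B
  set c := eval (-t ^ 2) P
  have hsum : 0 ≤ s k * c * t := by nlinarith
  refine Real.sqrt_le_iff.2 ⟨by nlinarith, ?_⟩
  have : (s k * c * t ^ 2) ^ 2 - t ^ 2 * (-((b + t * c) * (b - t * c))) = t ^ 2 * b ^ 2 := by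
    linear_combination (c ^ 2 * t ^ 4) * hs2
  nlinarith [mul_nonneg (sq_nonneg t) (sq_nonneg b)]

lemma Rre_mid_pos {g m : ℕ} (D : BranchData g m) {k : ℕ} (hk : 1 ≤ k) (hkm : k ≤ m) {x : ℝ}
    (h1 : (D.E (2 * k)).re < x) (h2 : x < (D.E (2 * k - 1)).re) : 0 < Rre g D.E x := by
  obtain ⟨B, P, -, hR, hF⟩ := exists_factorization D (s := fun _ => 1) (fun _ _ _ => Or.inl rfl)
  have hne : (Rpoly g D.E).eval (x : ℂ) ≠ 0 := by
    rw [Rpoly, eval_prod, Finset.prod_ne_zero_iff]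
    intro i hi h0
    rw [Finset.mem_range] at hi
    simp only [eval_sub, eval_X, eval_C, sub_eq_zero] at h0
    have hre : x = (D.E i).re := by rw [← h0, Complex.ofReal_re]
    have him : (D.E i).im = 0 := by rw [← h0, Complex.ofReal_im]
    rcases Nat.eq_zero_or_pos i with rfl | hi0
    · rw [D.hE0] at hre
      have := D.hneg (2 * k - 1) (by omega) (by omega)
      simp at hre
      linarith
    · by_cases him' : i ≤ 2 * m
      · rcases lt_trichotomy i (2 * k) with h | rfl | h
        · rcases lt_or_eq_of_le (show i ≤ 2 * k - 1 by omega) with h | rfl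
          · have := re_anti D hi0 h (by omega)
            linarith
          · linarith
        · linarith
        · have := re_anti D (by omega) h him'
          linarith
      · rcases Nat.even_or_odd' i with ⟨j, rfl | rfl⟩
        · refine D.hcomplex j (by omega) (by omega) ?_
          rw [D.hconj j (by omega) (by omega), Complex.conj_im] at him
          linarith
        · exact D.hcomplex (j + 1) (by omega) (by omega) him
  obtain ⟨t, ht, rfl⟩ := exists_sq (h2.trans (D.hneg (2 * k - 1) (by omega) (by omega)))
  obtain ⟨hu, hv⟩ := hF k hk hkm t ht.le h1.le h2.le
  refine lt_of_le_of_ne ?_ ?_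
  · rw [Rre_eq hR]
    refine mul_nonneg (sq_nonneg t) ?_
    nlinarith [mul_nonneg hu hv]
  · intro h0
    apply hne
    rw [Rre, eval_Rpoly hR, Complex.ofReal_re] at h0
    rw [eval_Rpoly hR, ← h0, Complex.ofReal_zero]

lemma type_unique {g m : ℕ} (D : BranchData g m) {s s' : ℕ → ℝ} (hs : SignVec m s)
    (hs' : SignVec m s') {P : ℝ[X]} (h : HasType g m D.E P s) (h' : HasType g m D.E P s')
    {k : ℕ} (hk : 1 ≤ k) (hkm : k ≤ m) : s k = s' k := by
  have hlt : (D.E (2 * k)).re < (D.E (2 * k - 1)).re :=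
    re_anti D (by omega) (by omega) (by omega)
  obtain ⟨x, h1, h2⟩ := exists_between hlt
  have hx := h2.trans (D.hneg (2 * k - 1) (by omega) (by omega))
  have hpos : 0 < √(Rre g D.E x) / (-x) :=
    div_pos (Real.sqrt_pos.2 (Rre_mid_pos D hk hkm h1 h2)) (by linarith)
  have i1 := h k hk hkm x h1.le h2.le
  have i2 := h' k hk hkm x h1.le h2.le
  rcases hs k hk hkm with e | e <;> rcases hs' k hk hkm with e' | e' <;> rw [e] at i1 ⊢ <;>
    rw [e'] at i2 ⊢ <;> linarith

/-- The sign vector `(s_1, …, s_m)` encoded by `m` booleans. -/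
def signOf {m : ℕ} (f : Fin m → Bool) (k : ℕ) : ℝ :=
  if h : 1 ≤ k ∧ k ≤ m then (if f ⟨k - 1, by omega⟩ then 1 else -1) else 1

lemma signOf_signVec {m : ℕ} (f : Fin m → Bool) : SignVec m (signOf f) := by
  intro k _ _
  unfold signOf
  split_ifs <;> simp

/-- For every choice of signs `s ∈ {+1, -1}^m` there exists an admissible
polynomial (real coefficients, degree at most `g-1`) of topological type `s`. In
particular the set of admissible polynomials splits into `2^m` nonempty classes indexed
by the topological types. -/
theorem statement5 (g m : ℕ) (D : BranchData g m) :
    (∀ s : ℕ → ℝ, SignVec m s →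
      ∃ P : Polynomial ℝ, P.natDegree ≤ g - 1 ∧ Admissible g D.E P ∧
        HasType g m D.E P s) ∧
    {C : Set (Polynomial ℝ) | ∃ s : ℕ → ℝ, SignVec m s ∧
      C = {P : Polynomial ℝ |
        P.natDegree ≤ g - 1 ∧ Admissible g D.E P ∧ HasType g m D.E P s}}.ncard
      = 2 ^ m := by
  refine ⟨fun s hs => exists_of_sign D hs, ?_⟩
  let Φ : (Fin m → Bool) → Set ℝ[X] := fun f =>
    {P | P.natDegree ≤ g - 1 ∧ Admissible g D.E P ∧ HasType g m D.E P (signOf f)}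
  have hinj : Function.Injective Φ := by
    intro f f' hff
    obtain ⟨P, hP⟩ := exists_of_sign D (signOf_signVec f)
    have hP' : P ∈ Φ f' := hff ▸ (show P ∈ Φ f from hP)
    funext i
    have := type_unique D (signOf_signVec f) (signOf_signVec f') hP.2.2 hP'.2.2
      (k := i + 1) (by omega) (by omega)
    have hi : 1 ≤ (i : ℕ) + 1 ∧ (i : ℕ) + 1 ≤ m := ⟨by omega, by omega⟩
    simp only [signOf, dif_pos hi, Nat.add_sub_cancel, Fin.eta] at this
    cases hf : f i <;> cases hf' : f' i <;> simp [hf, hf'] at this ⊢ <;> norm_num at this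
  have hset : {C : Set (Polynomial ℝ) | ∃ s : ℕ → ℝ, SignVec m s ∧
      C = {P : Polynomial ℝ |
        P.natDegree ≤ g - 1 ∧ Admissible g D.E P ∧ HasType g m D.E P s}} = Φ '' Set.univ := by
    ext A
    simp only [Set.mem_ofPred_eq, Set.image_univ, Set.mem_range]
    constructor
    · rintro ⟨s, hs, rfl⟩
      classical
      refine ⟨fun i => decide (s (i + 1) = 1), ?_⟩
      have hsame : ∀ k, 1 ≤ k → k ≤ m →
          signOf (fun i : Fin m => decide (s (i + 1) = 1)) k = s k := by
        intro k hk hkm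
        simp only [signOf, dif_pos (And.intro hk hkm), Nat.sub_add_cancel hk]
        rcases hs k hk hkm with h | h <;> rw [h] <;> norm_num
      ext P
      refine and_congr_right fun _ => and_congr_right fun _ => ?_
      unfold HasType
      refine forall_congr' fun k => forall_congr' fun hk => forall_congr' fun hkm => ?_
      rw [hsame k hk hkm]
    · rintro ⟨f, rfl⟩
      exact ⟨signOf f, signOf_signVec f, rfl⟩
  rw [hset, Set.ncard_image_of_injective _ hinj, Set.ncard_univ]
  simp
end
end

section
/- Let u : ℝⁿ → ℝ be continuous and assume that for every X ∈ ℝⁿ and every integer vector N ∈ ℤⁿ the difference u(X + N) − u(X) lies in 2πℤ, and let n_j ∈ ℤ (j = 1, …, n) be the integers with u(X + e_j) = u(X) + 2π n_j for all X. Then for every X₀ ∈ ℝⁿ and every U = (U¹, …, Uⁿ) ∈ ℝⁿ, the quotient (u(X₀ + T·U) − u(X₀))/(2π T) tends to ∑_{j=1}^{n} n_j U^j as T → +∞. In particular the density of topological charge of the restriction of u to the straight line X = X₀ + x·U is well defined and does not depend on the starting point X₀. -/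
/-!
Subtracting from `u` the linear form `2π ∑ j, n_j X_j` leaves a continuous function `v` with
periods `e_1, …, e_n`. Such a function factors through the compact cube `[0, 1]ⁿ`, so it is bounded
(`exists_bound_of_periodic_single`). Along the line `X₀ + T • U` the difference quotient of the
linear form is constantly `∑ j, n_j U_j`, while that of `v` is a bounded quantity divided by
`2πT`, which tends to `0`.
-/

lemma periodic_sum_zsmul_single {n : ℕ} {v : (Fin n → ℝ) → ℝ}
    (hv : ∀ j, Function.Periodic v (Pi.single j 1)) (N : Fin n → ℤ) (s : Finset (Fin n)) :
    Function.Periodic v (∑ j ∈ s, N j • (Pi.single j 1 : Fin n → ℝ)) := by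
  induction s using Finset.induction_on with
  | empty => intro X; simp
  | insert a s ha ih =>
    rw [Finset.sum_insert ha]
    exact ((hv a).zsmul (N a)).add_period ih

/-- A continuous function with periods `e_1, …, e_n` is bounded: translating by the integer parts
of the coordinates brings any point into the compact unit cube. -/
lemma exists_bound_of_periodic_single {n : ℕ} {v : (Fin n → ℝ) → ℝ} (hc : Continuous v)
    (hv : ∀ j, Function.Periodic v (Pi.single j 1)) : ∃ C, ∀ X, ‖v X‖ ≤ C := by
  obtain ⟨C, hC⟩ := (isCompact_Icc (a := (0 : Fin n → ℝ)) (b := 1)).exists_bound_of_continuousOn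
    hc.continuousOn
  refine ⟨C, fun X => ?_⟩
  have hX : (fun i => Int.fract (X i)) +
      ∑ j, ⌊X j⌋ • (Pi.single j 1 : Fin n → ℝ) = X := by
    ext i
    simp [Finset.sum_apply, Pi.single_apply]
  rw [← hX, periodic_sum_zsmul_single hv (fun j => ⌊X j⌋) Finset.univ]
  exact hC _ ⟨fun i => Int.fract_nonneg _, fun i => (Int.fract_lt_one _).le⟩

/-- Let `u : ℝⁿ → ℝ` be continuous such that `u(X+N) - u(X) ∈ 2πℤ` for all
`X ∈ ℝⁿ`, `N ∈ ℤⁿ`, and let `n_j ∈ ℤ` be the integers with `u(X + e_j) = u(X) + 2π n_j`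
for all `X`. Then for every `X₀ ∈ ℝⁿ` and every `U ∈ ℝⁿ`, the quotient
`(u(X₀ + T·U) - u(X₀)) / (2πT)` tends to `∑_j n_j U^j` as `T → +∞`. In particular the
density of topological charge of the restriction of `u` to the line `X = X₀ + x·U` is
well defined and independent of the starting point `X₀`. -/
theorem statement11 (n : ℕ) (hn : 1 ≤ n) (u : (Fin n → ℝ) → ℝ) (hu : Continuous u)
    (hper : ∀ (X : Fin n → ℝ) (N : Fin n → ℤ), ∃ k : ℤ,
      u (X + fun i => (N i : ℝ)) - u X = 2 * Real.pi * k)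
    (nv : Fin n → ℤ)
    (hnv : ∀ (j : Fin n) (X : Fin n → ℝ),
      u (X + Pi.single j 1) = u X + 2 * Real.pi * nv j) :
    ∀ (X₀ U : Fin n → ℝ),
      Filter.Tendsto (fun T : ℝ => (u (X₀ + T • U) - u X₀) / (2 * Real.pi * T))
        Filter.atTop (nhds (∑ j, (nv j : ℝ) * U j)) := by
  intro X₀ U
  set L : (Fin n → ℝ) → ℝ := fun X => ∑ j, (nv j : ℝ) * X j with hL
  have hLadd : ∀ X Y, L (X + Y) = L X + L Y := fun X Y => by
    simp [hL, mul_add, Finset.sum_add_distrib]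
  have hLsmul : ∀ (T : ℝ) X, L (T • X) = T * L X := fun T X => by
    simp only [hL, Pi.smul_apply, smul_eq_mul, Finset.mul_sum]
    exact Finset.sum_congr rfl fun j _ => by ring
  have hLsingle : ∀ j, L (Pi.single j 1) = nv j := fun j => by
    simp [hL, Pi.single_apply]
  set v : (Fin n → ℝ) → ℝ := fun X => u X - 2 * Real.pi * L X with hvdef
  have hvc : Continuous v := by fun_prop
  obtain ⟨C, hC⟩ := exists_bound_of_periodic_single hvc fun j X => by
    simp only [hvdef, hnv, hLadd, hLsingle]
    ring
  have hden : Filter.Tendsto (fun T : ℝ => 2 * Real.pi * T) Filter.atTop Filter.atTop :=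
    Filter.tendsto_id.const_mul_atTop (by positivity)
  have h0 : Filter.Tendsto (fun T : ℝ => (v (X₀ + T • U) - v X₀) / (2 * Real.pi * T))
      Filter.atTop (nhds 0) := by
    refine squeeze_zero_norm' ?_ (hden.const_div_atTop (C + C))
    filter_upwards [Filter.eventually_gt_atTop 0] with T hT
    have hpos : 0 < 2 * Real.pi * T := by positivity
    rw [norm_div, Real.norm_of_nonneg hpos.le]
    gcongr
    exact (norm_sub_le _ _).trans (add_le_add (hC _) (hC _))
  have h1 := h0.add_const (L U)
  rw [zero_add] at h1
  refine h1.congr' ?_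
  filter_upwards [Filter.eventually_gt_atTop 0] with T hT
  simp only [hvdef, hLadd, hLsmul]
  field_simp
  ring
end

section
/- Let u : ℝ² → ℝ be twice continuously differentiable and fix λ ∈ ℂ with λ ≠ 0. Define 2×2 complex matrix-valued functions U(λ,x,t) = [[i(u_x+u_t), 1], [−λ, −i(u_x+u_t)]] and V(λ,x,t) = [[0, −(1/λ)e^{iu}], [e^{−iu}, 0]], and set A = (1/4)(U+V), B = (1/4)(U−V). Then the zero-curvature equation ∂_t A − ∂_x B + A·B − B·A = 0 holds at every point (x,t) ∈ ℝ² if and only if u satisfies the Sine-Gordon equation u_tt − u_xx + sin u = 0 at every point of ℝ². -/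
/-!
Write `w = i (u_x + u_t)`, `b = -(1/λ) e^{iu}`, `c = e^{-iu}`.  Since
`[A, B] = -(1/8) [U, V]`, the curvature is `(1/4) (U_t - U_x + V_t + V_x) - (1/8) [U, V]`.
Off the diagonal it vanishes for every `u`: `b_t + b_x = w b` and `c_t + c_x = -w c`
cancel the entries `2 w b` and `-2 w c` of `[U, V]`.  On the diagonal the mixed partials of `u`
cancel by the symmetry of the second derivative, leaving `i (u_tt - u_xx)`, and
`[U, V]₁₁ = c + λ b = e^{-iu} - e^{iu} = -2 i sin u`.  Hence the curvature is
`(i/4) (u_tt - u_xx + sin u) · diag(1, -1)`, which is zero exactly when the Sine-Gordon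
expression is (`curvature_eq`).
-/


noncomputable section

/-- The matrix `U(λ,x,t) = [[i(u_x+u_t), 1], [-λ, -i(u_x+u_t)]]`. -/
def Umat (u : ℝ → ℝ → ℝ) (lam : ℂ) (x t : ℝ) : Matrix (Fin 2) (Fin 2) ℂ :=
  !![Complex.I * ((deriv (fun y => u y t) x + deriv (u x) t : ℝ) : ℂ), 1;
     -lam, -(Complex.I * ((deriv (fun y => u y t) x + deriv (u x) t : ℝ) : ℂ))]

/-- The matrix `V(λ,x,t) = [[0, -(1/λ)e^{iu}], [e^{-iu}, 0]]`. -/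
def Vmat (u : ℝ → ℝ → ℝ) (lam : ℂ) (x t : ℝ) : Matrix (Fin 2) (Fin 2) ℂ :=
  !![0, -(1 / lam) * Complex.exp (Complex.I * (u x t : ℂ));
     Complex.exp (-(Complex.I * (u x t : ℂ))), 0]

/-- `A = (1/4)(U+V)`. -/
def Amat (u : ℝ → ℝ → ℝ) (lam : ℂ) (x t : ℝ) : Matrix (Fin 2) (Fin 2) ℂ :=
  ((1 : ℂ) / 4) • (Umat u lam x t + Vmat u lam x t)

/-- `B = (1/4)(U-V)`. -/
def Bmat (u : ℝ → ℝ → ℝ) (lam : ℂ) (x t : ℝ) : Matrix (Fin 2) (Fin 2) ℂ :=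
  ((1 : ℂ) / 4) • (Umat u lam x t - Vmat u lam x t)

section Partials

variable {u : ℝ → ℝ → ℝ}

lemma hasDerivAt_fst (hu : ContDiff ℝ 2 (Function.uncurry u)) (x t : ℝ) :
    HasDerivAt (fun y => u y t) (fderiv ℝ (Function.uncurry u) (x, t) (1, 0)) x := by
  have h := (hu.differentiable (by norm_num) (x, t)).hasFDerivAt
  exact h.comp_hasDerivAt x ((hasDerivAt_id x).prodMk (hasDerivAt_const x t))

lemma hasDerivAt_snd (hu : ContDiff ℝ 2 (Function.uncurry u)) (x t : ℝ) :
    HasDerivAt (u x) (fderiv ℝ (Function.uncurry u) (x, t) (0, 1)) t := by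
  have h := (hu.differentiable (by norm_num) (x, t)).hasFDerivAt
  exact h.comp_hasDerivAt t ((hasDerivAt_const t x).prodMk (hasDerivAt_id t))

/-- This is where the `C²` hypothesis enters: the first derivative is itself differentiable. -/
lemma hasFDerivAt_fderiv (hu : ContDiff ℝ 2 (Function.uncurry u)) (p : ℝ × ℝ) :
    HasFDerivAt (fderiv ℝ (Function.uncurry u))
      (fderiv ℝ (fderiv ℝ (Function.uncurry u)) p) p :=
  ((hu.fderiv_right (m := 1) (by norm_num)).differentiable (by norm_num) p).hasFDerivAt

lemma hasDerivAt_fderiv_fst (hu : ContDiff ℝ 2 (Function.uncurry u)) (x t : ℝ) (v : ℝ × ℝ) :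
    HasDerivAt (fun y => fderiv ℝ (Function.uncurry u) (y, t) v)
      (fderiv ℝ (fderiv ℝ (Function.uncurry u)) (x, t) (1, 0) v) x := by
  have h := (hasFDerivAt_fderiv hu (x, t)).comp_hasDerivAt x
    ((hasDerivAt_id x).prodMk (hasDerivAt_const x t))
  simpa using h.clm_apply (hasDerivAt_const x v)

lemma hasDerivAt_fderiv_snd (hu : ContDiff ℝ 2 (Function.uncurry u)) (x t : ℝ) (v : ℝ × ℝ) :
    HasDerivAt (fun s => fderiv ℝ (Function.uncurry u) (x, s) v)
      (fderiv ℝ (fderiv ℝ (Function.uncurry u)) (x, t) (0, 1) v) t := by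
  have h := (hasFDerivAt_fderiv hu (x, t)).comp_hasDerivAt t
    ((hasDerivAt_const t x).prodMk (hasDerivAt_id t))
  simpa using h.clm_apply (hasDerivAt_const t v)

end Partials

/-- The curvature of the pair `(A, B)` is `(i/4) (u_tt - u_xx + sin u) · diag(1, -1)`. -/
lemma curvature_eq (u : ℝ → ℝ → ℝ) (hu : ContDiff ℝ 2 (Function.uncurry u))
    (lam : ℂ) (hlam : lam ≠ 0) (x t : ℝ) :
    (Matrix.of fun i j => deriv (fun s => Amat u lam x s i j) t)
        - (Matrix.of fun i j => deriv (fun y => Bmat u lam y t i j) x)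
        + Amat u lam x t * Bmat u lam x t - Bmat u lam x t * Amat u lam x t
      = (Complex.I / 4 * ((deriv (deriv (u x)) t
          - deriv (fun y => deriv (fun y' => u y' t) y) x + Real.sin (u x t) : ℝ) : ℂ)) •
        (!![1, 0; 0, -1] : Matrix (Fin 2) (Fin 2) ℂ) := by
  have e1 : ∀ x t, deriv (fun y => u y t) x = fderiv ℝ (Function.uncurry u) (x, t) (1, 0) :=
    fun x t => (hasDerivAt_fst hu x t).deriv
  have e2 : ∀ x t, deriv (u x) t = fderiv ℝ (Function.uncurry u) (x, t) (0, 1) :=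
    fun x t => (hasDerivAt_snd hu x t).deriv
  have e2' : ∀ x, deriv (u x) = fun t => fderiv ℝ (Function.uncurry u) (x, t) (0, 1) :=
    fun x => funext (e2 x)
  have hsymm : fderiv ℝ (fderiv ℝ (Function.uncurry u)) (x, t) (0, 1) (1, 0)
      = fderiv ℝ (fderiv ℝ (Function.uncurry u)) (x, t) (1, 0) (0, 1) :=
    (hu.contDiffAt.isSymmSndFDerivAt (by simp)).eq _ _
  have hwx := (((hasDerivAt_fderiv_fst hu x t (1, 0)).add
    (hasDerivAt_fderiv_fst hu x t (0, 1))).ofReal_comp).const_mul Complex.I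
  have hwt := (((hasDerivAt_fderiv_snd hu x t (1, 0)).add
    (hasDerivAt_fderiv_snd hu x t (0, 1))).ofReal_comp).const_mul Complex.I
  have hux := (hasDerivAt_fst hu x t).ofReal_comp.const_mul Complex.I
  have hut := (hasDerivAt_snd hu x t).ofReal_comp.const_mul Complex.I
  -- The second partials of `u` along the axes, as values of the second Fréchet derivative.
  have htt := (hasDerivAt_fderiv_snd hu x t (0, 1)).deriv
  have hxx := (hasDerivAt_fderiv_fst hu x t (1, 0)).deriv
  have hbx := hux.cexp.const_mul (-(1 / lam))
  have hbt := hut.cexp.const_mul (-(1 / lam))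
  have hcx := hux.neg.cexp
  have hct := hut.neg.cexp
  -- `aij` and `bij` are the derivatives of the entries `A i j` in `t` and `B i j` in `x`.
  have a00 := (hwt.const_mul ((1 : ℂ) / 4)).deriv
  have a11 := (hwt.neg.const_mul ((1 : ℂ) / 4)).deriv
  have a01 := ((hbt.const_add 1).const_mul ((1 : ℂ) / 4)).deriv
  have a10 := ((hct.const_add (-lam)).const_mul ((1 : ℂ) / 4)).deriv
  have b00 := (hwx.const_mul ((1 : ℂ) / 4)).deriv
  have b11 := (hwx.neg.const_mul ((1 : ℂ) / 4)).deriv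
  have b01 := ((hbx.const_sub 1).const_mul ((1 : ℂ) / 4)).deriv
  have b10 := ((hcx.const_sub (-lam)).const_mul ((1 : ℂ) / 4)).deriv
  have hsin : Complex.sin (u x t) =
      (Complex.exp (-(Complex.I * (u x t : ℂ))) - Complex.exp (Complex.I * (u x t : ℂ)))
        * Complex.I / 2 := by
    rw [Complex.sin]; ring_nf
  simp only [Pi.add_apply, Pi.neg_apply]
    at a00 a01 a10 a11 b00 b01 b10 b11
  ext i j
  fin_cases i <;> fin_cases j <;>
    simp only [Amat, Bmat, Umat, Vmat, e1, e2, e2', htt, hxx, Matrix.of_apply, Matrix.add_apply,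
      Matrix.sub_apply, Matrix.smul_apply, Matrix.mul_apply, Fin.sum_univ_two, smul_eq_mul,
      Matrix.cons_val', Matrix.cons_val_zero, Matrix.cons_val_one, Matrix.cons_val_fin_one,
      Fin.zero_eta, Fin.mk_one, Fin.isValue, add_zero, sub_zero,
      a00, a01, a10, a11, b00, b01, b10, b11, hsymm]
  all_goals
    push_cast
    rw [hsin]
    field_simp
    ring_nf
    try simp only [Complex.I_sq]
    try ring_nf

/-- For a twice continuously differentiable `u : ℝ² → ℝ` and a fixed
`λ ∈ ℂ`, `λ ≠ 0`, the zero-curvature equation `∂_t A - ∂_x B + A·B - B·A = 0` (with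
`A = (1/4)(U+V)`, `B = (1/4)(U-V)`, the derivatives taken entrywise) holds at every point
`(x,t) ∈ ℝ²` iff `u` satisfies the Sine-Gordon equation `u_tt - u_xx + sin u = 0` at
every point of `ℝ²`. -/
theorem statement14 (u : ℝ → ℝ → ℝ) (hu : ContDiff ℝ 2 (Function.uncurry u))
    (lam : ℂ) (hlam : lam ≠ 0) :
    (∀ x t : ℝ,
      (Matrix.of fun i j => deriv (fun s => Amat u lam x s i j) t)
        - (Matrix.of fun i j => deriv (fun y => Bmat u lam y t i j) x)
        + Amat u lam x t * Bmat u lam x t - Bmat u lam x t * Amat u lam x t = 0) ↔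
    (∀ x t : ℝ,
      deriv (deriv (u x)) t - deriv (fun y => deriv (fun y' => u y' t) y) x
        + Real.sin (u x t) = 0) := by
  refine forall_congr' fun x => forall_congr' fun t => ?_
  rw [curvature_eq u hu lam hlam x t]
  constructor
  · intro h
    have h00 := congrFun (congrFun h 0) 0
    simpa only [Matrix.smul_apply, Matrix.of_apply, Matrix.cons_val', Matrix.cons_val_zero,
      Matrix.zero_apply, smul_eq_mul, mul_one, mul_eq_zero, div_eq_zero_iff, Complex.I_ne_zero,
      OfNat.ofNat_ne_zero, or_false, false_or, Complex.ofReal_eq_zero] using h00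
  · intro h
    rw [h, Complex.ofReal_zero, mul_zero, zero_smul]
end
end
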